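/- arXiv:2205.11125 — 8 statements merged into one kernel-verified Lean document; each statement's English description precedes it below -/
import Mathlib

section
/- Let G be a finite simple connected graph. If G has an even number of edges or G contains at least one vertex of odd degree, then G admits a 2-edge-coloring c : E(G) → {1,2} such that, for every vertex u of G and every color α ∈ {1,2}, at most ⌈d_G(u)/2⌉ of the edges incident with u have color α. -/
/-!
Encode a 2-coloring as a sign `±1` on each edge. The required bound at `u` says exactly that the
signs of the edges at `u` sum to `0` or `±1` (`coloring_of_signs`).

A connected graph with all degrees even has an Eulerian circuit (`exists_eulerian_circuit`), and
alternating signs along a circuit based at `s` cancel at every vertex other than `s`, and also at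
`s` if the number of edges is even (`eulerian_coloring`).

If every degree of `G` is even, then by hypothesis the number of edges is even, and this applies
directly to `G`. Otherwise add an apex joined to all vertices of odd degree (`oddApex`); the
resulting graph is connected with all degrees even. Alternate signs along an Eulerian circuit based
at the apex: all original vertices are balanced, and deleting the apex removes at most one edge at
each of them.
-/

open SimpleGraph

/-- The extension step behind Euler's theorem: in a connected graph with all degrees even, a trail
can be lengthened unless the graph has an Eulerian circuit. An open trail extends at its start by
parity; a closed one is rotated to a vertex that meets an unused edge. -/
theorem exists_longer_trail {V : Type*} [Fintype V] [DecidableEq V]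
    (G : SimpleGraph V) [DecidableRel G.Adj] (hconn : G.Connected)
    (heven : ∀ v, Even (G.degree v)) {u v : V} (p : G.Walk u v) (hp : p.IsTrail)
    (hno : ¬ ∃ (x : V) (q : G.Walk x x), q.IsEulerian) :
    ∃ (x y : V) (q : G.Walk x y), q.IsTrail ∧ q.length = p.length + 1 := by
  by_cases huv : u = v
  · subst huv
    have hmiss : ∃ e ∈ G.edgeSet, e ∉ p.edges := by
      by_contra! hc
      exact hno ⟨u, p, hp.isEulerian_of_forall_mem hc⟩
    -- Either `p` visits every vertex, or connectivity gives an edge leaving its support.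
    have hbd : ∃ x y, x ∈ p.support ∧ G.Adj y x ∧ s(y, x) ∉ p.edges := by
      by_cases hall : ∀ x, x ∈ p.support
      · obtain ⟨e, he, hep⟩ := hmiss
        induction e with
        | _ a b => exact ⟨b, a, hall b, he, hep⟩
      · push Not at hall
        obtain ⟨z, hz⟩ := hall
        obtain ⟨w⟩ := hconn.preconnected u z
        obtain ⟨d, -, h1, h2⟩ := w.exists_boundary_dart {x | x ∈ p.support}
          p.start_mem_support hz
        exact ⟨d.fst, d.snd, h1, d.adj.symm, fun h => h2 (p.fst_mem_support_of_mem_edges h)⟩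
    obtain ⟨x, y, hx, hadj, hxy⟩ := hbd
    refine ⟨y, x, Walk.cons hadj (p.rotate x hx), ?_, ?_⟩
    · rw [Walk.isTrail_cons]
      exact ⟨(Walk.isTrail_rotate hx).2 hp, by rwa [(p.rotate_edges x hx).mem_iff]⟩
    · simp
  · -- An open trail uses an odd number of the edges at its start, so one of them is unused.
    have hodd : ¬ Even (p.edges.countP fun e => u ∈ e) := by
      rw [hp.even_countP_edges_iff]; simp [huv]
    have : ∃ w, G.Adj w u ∧ s(w, u) ∉ p.edges := by
      by_contra! hc
      apply hodd
      have : (p.edges.countP fun e => u ∈ e) = (G.incidenceFinset u).card := by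
        rw [List.countP_eq_length_filter,
          ← List.toFinset_card_of_nodup (hp.edges_nodup.filter _)]
        congr 1
        ext e
        simp only [List.mem_toFinset, List.mem_filter, decide_eq_true_eq, mem_incidenceFinset]
        constructor
        · rintro ⟨h1, h2⟩; exact ⟨p.edges_subset_edgeSet h1, h2⟩
        · rintro ⟨h1, h2⟩
          refine ⟨?_, h2⟩
          obtain ⟨w, rfl⟩ := Sym2.mem_iff_exists.1 h2
          rw [Sym2.eq_swap]
          exact hc w (G.adj_symm h1)
      rw [this, card_incidenceFinset_eq_degree]
      exact heven u
    obtain ⟨w, hw, hwp⟩ := this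
    exact ⟨w, v, Walk.cons hw p, by simp [Walk.isTrail_cons, hp, hwp], by simp⟩

/-- Euler's theorem: trails have bounded length, so they cannot be lengthened forever. -/
theorem exists_eulerian_circuit {V : Type*} [Fintype V] [DecidableEq V]
    (G : SimpleGraph V) [DecidableRel G.Adj] (hconn : G.Connected)
    (heven : ∀ v, Even (G.degree v)) : ∃ (x : V) (q : G.Walk x x), q.IsEulerian := by
  by_contra hno
  have key : ∀ n : ℕ, ∃ (x y : V) (q : G.Walk x y), q.IsTrail ∧ q.length = n := by
    intro n
    induction n with
    | zero =>
      obtain ⟨x⟩ := hconn.nonempty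
      exact ⟨x, x, Walk.nil, by simp, rfl⟩
    | succ n ih =>
      obtain ⟨x, y, q, hq, rfl⟩ := ih
      exact exists_longer_trail G hconn heven q hq hno
  obtain ⟨x, y, q, hq, hl⟩ := key (G.edgeFinset.card + 1)
  have := hq.length_le_card_edgeFinset
  omega

/-- Alternating signs along a trail, starting with `σ`: every passage through a vertex contributes
`0`, so only the two ends of the trail contribute to the sums of signs at the vertices. -/
theorem exists_alternating {V : Type*} [DecidableEq V] {G : SimpleGraph V} {u v : V}
    (p : G.Walk u v) (hp : p.IsTrail) (σ : ℤ) (hσ : σ = 1 ∨ σ = -1) :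
    ∃ f : Sym2 V → ℤ, (∀ e, f e = 1 ∨ f e = -1) ∧
      ∀ x, (p.edges.map fun e => if x ∈ e then f e else 0).sum =
        (if x = u then σ else 0) - (if x = v then σ * (-1) ^ p.length else 0) := by
  induction p generalizing σ with
  | nil => exact ⟨fun _ => 1, by simp, by simp⟩
  | @cons a b c hab q ih =>
    rw [Walk.isTrail_cons] at hp
    obtain ⟨f, hf, hsum⟩ := ih hp.1 (-σ) (by omega)
    refine ⟨Function.update f s(a, b) σ, ?_, ?_⟩
    · intro e
      by_cases he : e = s(a, b)
      · simpa [he] using hσ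
      · simpa [he] using hf e
    · intro x
      have hq : (q.edges.map fun e => if x ∈ e then Function.update f s(a, b) σ e else 0) =
          q.edges.map fun e => if x ∈ e then f e else 0 := by
        apply List.map_congr_left
        intro e he
        rw [Function.update_of_ne (by rintro rfl; exact hp.2 he)]
      rw [Walk.edges_cons, List.map_cons, List.sum_cons, hq, hsum x]
      have hne := hab.ne
      by_cases h1 : x = a <;> by_cases h2 : x = b <;> by_cases h3 : x = c <;>
        simp_all [pow_succ]

/-- A connected graph with all degrees even has an edge signing that is balanced at every vertex
except possibly one prescribed vertex `s`, and balanced at `s` too if the number of edges is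
even. -/
theorem eulerian_coloring {V : Type*} [Fintype V] [DecidableEq V]
    (G : SimpleGraph V) [DecidableRel G.Adj] (hconn : G.Connected)
    (heven : ∀ v, Even (G.degree v)) (s : V) :
    ∃ f : Sym2 V → ℤ, (∀ e, f e = 1 ∨ f e = -1) ∧
      ∀ x, (x = s → Even G.edgeFinset.card) → ∑ e ∈ G.incidenceFinset x, f e = 0 := by
  obtain ⟨y, p, hp⟩ := exists_eulerian_circuit G hconn heven
  have hE : ∃ q : G.Walk s s, q.IsEulerian := by
    by_cases hs : s ∈ p.support
    · refine ⟨p.rotate s hs, ((Walk.isTrail_rotate hs).2 hp.isTrail).isEulerian_of_forall_mem fun e he => ?_⟩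
      rw [(p.rotate_edges s hs).mem_iff]
      exact hp.mem_edges_iff.2 he
    · -- A vertex off the circuit has no neighbor, so it is the only vertex: a contradiction with
      -- any step of a walk from `s` to the base point `y`.
      obtain ⟨w⟩ := hconn.preconnected s y
      cases w with
      | nil => exact ⟨p, hp⟩
      | cons h _ => exact absurd (p.fst_mem_support_of_mem_edges (hp.mem_edges_iff.2 h)) hs
  obtain ⟨q, hq⟩ := hE
  obtain ⟨f, hf, hsum⟩ := exists_alternating q hq.isTrail 1 (.inl rfl)
  have hset : q.edges.toFinset = G.edgeFinset := by
    ext e; simp [hq.mem_edges_iff]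
  refine ⟨f, hf, fun x hx => ?_⟩
  have h := hsum x
  rw [← List.sum_toFinset _ hq.isTrail.edges_nodup, hset, ← Finset.sum_filter,
    ← incidenceFinset_eq_filter] at h
  rw [h]
  by_cases hxs : x = s
  · have hl : q.length = G.edgeFinset.card := by
      rw [← hset, List.toFinset_card_of_nodup hq.isTrail.edges_nodup, Walk.length_edges]
    simp [hxs, hl, (hx hxs).neg_one_pow]
  · simp [hxs]

theorem sum_incidence {V : Type*} [Fintype V] [DecidableEq V]
    (G : SimpleGraph V) [DecidableRel G.Adj] (f : Sym2 V → ℤ) (v : V) :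
    ∑ e ∈ G.incidenceFinset v, f e = ∑ w, if G.Adj v w then f s(v, w) else 0 := by
  rw [← Finset.sum_filter]
  symm
  refine Finset.sum_bij (fun w _ => s(v, w)) ?_ ?_ ?_ ?_
  · intro w hw; simpa using hw
  · intro a _ b _ h; exact Sym2.congr_right.1 h
  · intro e he
    rw [mem_incidenceFinset] at he
    obtain ⟨w, rfl⟩ := Sym2.mem_iff_exists.1 he.2
    exact ⟨w, by simpa using he.1, rfl⟩
  · simp

/-- A signing whose imbalance is at most `1` at every vertex yields the required coloring: color `0`
for sign `1` and color `1` for sign `-1`. -/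
theorem coloring_of_signs {V : Type*} [Fintype V] [DecidableEq V]
    (G : SimpleGraph V) [DecidableRel G.Adj] (f : Sym2 V → ℤ)
    (hf : ∀ e, f e = 1 ∨ f e = -1)
    (hb : ∀ v, |∑ e ∈ G.incidenceFinset v, f e| ≤ 1) :
    ∃ c : Sym2 V → Fin 2, ∀ u : V, ∀ α : Fin 2,
      ((G.incidenceFinset u).filter (fun e => c e = α)).card ≤ (G.degree u + 1) / 2 := by
  refine ⟨fun e => if f e = 1 then 0 else 1, fun u α => ?_⟩
  have h0 : ((G.incidenceFinset u).filter (fun e => f e = 1)).card +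
      ((G.incidenceFinset u).filter (fun e => ¬ f e = 1)).card = G.degree u := by
    rw [Finset.card_filter_add_card_filter_not, card_incidenceFinset_eq_degree]
  have h1 : ∑ e ∈ G.incidenceFinset u, f e =
      ((G.incidenceFinset u).filter (fun e => f e = 1)).card -
      (((G.incidenceFinset u).filter (fun e => ¬ f e = 1)).card : ℤ) := by
    rw [← Finset.sum_filter_add_sum_filter_not _ (fun e => f e = 1),
      Finset.sum_congr rfl (fun e he => (Finset.mem_filter.1 he).2),
      Finset.sum_congr (s₁ := {e ∈ G.incidenceFinset u | ¬ f e = 1}) rfl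
        (fun e he => (hf e).resolve_left (Finset.mem_filter.1 he).2)]
    simp [sub_eq_add_neg]
  have h2 := abs_le.1 (hb u)
  rw [h1] at h2
  have e0 : ∀ e, ((if f e = 1 then (0 : Fin 2) else 1) = 0) ↔ f e = 1 := fun e => by
    split_ifs <;> simp_all
  have e1 : ∀ e, ((if f e = 1 then (0 : Fin 2) else 1) = 1) ↔ ¬ f e = 1 := fun e => by
    split_ifs <;> simp_all
  fin_cases α
  · simp only [Fin.zero_eta, e0]; omega
  · simp only [Fin.mk_one, e1]; omega

/-- The graph `G` together with a new vertex `none` joined to the vertices of odd degree. -/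
def oddApex {V : Type*} [Fintype V] (G : SimpleGraph V) [DecidableRel G.Adj] :
    SimpleGraph (Option V) where
  Adj
    | some a, some b => G.Adj a b
    | some a, none => Odd (G.degree a)
    | none, some b => Odd (G.degree b)
    | none, none => False
  symm := ⟨by rintro (_ | a) (_ | b) h <;> first | exact h | exact G.adj_symm h⟩
  loopless := ⟨by rintro (_ | a) h <;> simp_all⟩

theorem oddApex_some_some {V : Type*} [Fintype V] (G : SimpleGraph V) [DecidableRel G.Adj]
    (a b : V) : (oddApex G).Adj (some a) (some b) ↔ G.Adj a b := Iff.rfl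

theorem oddApex_some_none {V : Type*} [Fintype V] (G : SimpleGraph V) [DecidableRel G.Adj]
    (a : V) : (oddApex G).Adj (some a) none ↔ Odd (G.degree a) := Iff.rfl

theorem oddApex_none_some {V : Type*} [Fintype V] (G : SimpleGraph V) [DecidableRel G.Adj]
    (a : V) : (oddApex G).Adj none (some a) ↔ Odd (G.degree a) := Iff.rfl

theorem oddApex_connected {V : Type*} [Fintype V] (G : SimpleGraph V) [DecidableRel G.Adj]
    (hconn : G.Connected) (h : ∃ u, Odd (G.degree u)) : (oddApex G).Connected := by
  obtain ⟨u, hu⟩ := h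
  let φ : G →g oddApex G := ⟨some, fun h => h⟩
  rw [connected_iff_exists_forall_reachable]
  refine ⟨some u, ?_⟩
  rintro (_ | w)
  · exact Adj.reachable (G := oddApex G) (u := some u) (v := none) hu
  · exact (hconn.preconnected u w).map φ

open Classical in
theorem oddApex_even {V : Type*} [Fintype V] (G : SimpleGraph V) [DecidableRel G.Adj]
    (x : Option V) : Even ((oddApex G).degree x) := by
  have hdeg : (oddApex G).degree x = ∑ w, if (oddApex G).Adj x w then 1 else 0 := by
    rw [← card_neighborFinset_eq_degree, neighborFinset_eq_filter, Finset.card_filter]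
  rw [hdeg, Fintype.sum_option]
  cases x with
  | none =>
    have := G.even_card_odd_degree_vertices
    rw [Finset.card_filter] at this
    simpa only [oddApex_none_some, SimpleGraph.irrefl, if_false, zero_add] using this
  | some v =>
    have hd : ∑ w, (if G.Adj v w then 1 else 0) = G.degree v := by
      rw [← card_neighborFinset_eq_degree, neighborFinset_eq_filter, Finset.card_filter]
    simp only [oddApex_some_some, oddApex_some_none, hd]
    split_ifs with h
    · exact odd_one.add_odd h
    · simpa using h

/-- Let `G` be a finite simple connected graph. If `G` has an even number
of edges or contains a vertex of odd degree, then `G` admits a `2`-edge-coloring such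
that, for every vertex `u` and every color `α`, at most `⌈d_G(u)/2⌉` of the edges
incident with `u` have color `α`. -/
theorem majority_two_coloring_ceil {V : Type*} [Fintype V] [DecidableEq V]
    (G : SimpleGraph V) [DecidableRel G.Adj] (hconn : G.Connected)
    (h : Even G.edgeFinset.card ∨ ∃ u : V, Odd (G.degree u)) :
    ∃ c : Sym2 V → Fin 2, ∀ u : V, ∀ α : Fin 2,
      ((G.incidenceFinset u).filter (fun e => c e = α)).card ≤ (G.degree u + 1) / 2 := by
  classical
  by_cases hodd : ∃ u : V, Odd (G.degree u)
  · obtain ⟨f, hf, hsum⟩ := eulerian_coloring (oddApex G) (oddApex_connected G hconn hodd)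
      (oddApex_even G) none
    refine coloring_of_signs G (fun e => f (e.map some)) (fun e => hf _) fun v => ?_
    have hv := hsum (some v) (by simp)
    rw [sum_incidence, Fintype.sum_option] at hv
    rw [sum_incidence]
    simp only [oddApex_some_some, oddApex_some_none] at hv
    simp only [Sym2.map_mk]
    rw [← eq_neg_iff_add_eq_zero, eq_comm, neg_eq_iff_eq_neg] at hv
    rw [hv]
    rcases hf s(some v, none) with h1 | h1 <;> split_ifs <;> simp [h1]
  · have hE := h.resolve_right hodd
    push Not at hodd
    obtain ⟨s⟩ := hconn.nonempty
    obtain ⟨f, hf, hsum⟩ := eulerian_coloring G hconn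
      (fun v => by simpa using hodd v) s
    exact coloring_of_signs G f hf fun v => by simp [hsum v (fun _ => hE)]
end

section
/- Every finite simple graph of minimum degree at least 2 has a majority 4-edge-coloring. -/
/-!
Each vertex `u` of degree `d` is split into `⌊d / 2⌋` vertices, and the edges at `u` are
distributed so that every one of them receives at most three edges.  The resulting graph is simple
and subcubic.  In a proper `4`-edge-coloring of it, every color occurs at most once at each part
of `u`, hence at most `⌊d / 2⌋` times at `u`, which is the majority condition.

It remains to color a subcubic graph properly with four colors (`exists_proper`).  This is done by
adding edges one at a time (`extend_step`).  Let `uv` be the new edge.  If `u` and `v` miss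
no common color, then, as each misses at least two, their missing sets partition the four colors.
Take `b` missing at `v`; some edge `ux` has color `b`.  The vertex `x` misses some color `k`.
If `k` is missing at `u`, recolor `ux` with `k` and give `uv` the color `b`.  Otherwise `k` is
missing at `v`; take `a` missing at `u`.  In the subgraph of edges colored `a` or `k`, which has
maximum degree two, the vertices `u`, `v`, `x` have degree at most one, so they do not all lie in
one component (`not_three_ends`).  A Kempe swap on the component of `u` or of `x` then leads back
to one of the two easy cases.
-/

namespace MajorityColoring

/-! ### Proper colorings of edge sets and Kempe swaps -/

section Proper

variable {W : Type*}

/-- Distinct edges of `E` sharing a vertex get distinct colors under `c`. -/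
def Proper (E : Finset (Sym2 W)) (c : Sym2 W → Fin 4) : Prop :=
  ∀ w, ∀ e ∈ E, ∀ f ∈ E, w ∈ e → w ∈ f → c e = c f → e = f

/-- No edge of `E` at `w` has color `k`. -/
def Misses (E : Finset (Sym2 W)) (c : Sym2 W → Fin 4) (w : W) (k : Fin 4) : Prop :=
  ∀ e ∈ E, w ∈ e → c e ≠ k

lemma proper_insert [DecidableEq W] {E : Finset (Sym2 W)} {c : Sym2 W → Fin 4}
    (hc : Proper E c) {u v : W} (he : s(u, v) ∉ E) {k : Fin 4} (hu : Misses E c u k) (hv : Misses E c v k) :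
    ∃ c', Proper (insert s(u, v) E) c' := by
  have key : ∀ w, w ∈ s(u, v) → Misses E c w k := by
    intro w hw
    rcases Sym2.mem_iff.1 hw with rfl | rfl <;> assumption
  refine ⟨Function.update c s(u, v) k, ?_⟩
  intro w e heE f hfE hwe hwf hef
  by_cases h1 : e = s(u, v) <;> by_cases h2 : f = s(u, v)
  · rw [h1, h2]
  · have hf := (Finset.mem_insert.1 hfE).resolve_left h2
    subst h1
    rw [Function.update_self, Function.update_of_ne h2] at hef
    exact absurd hef.symm (key w hwe f hf hwf)
  · have hf := (Finset.mem_insert.1 heE).resolve_left h1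
    subst h2
    rw [Function.update_self, Function.update_of_ne h1] at hef
    exact absurd hef (key w hwf e hf hwe)
  · rw [Function.update_of_ne h2, Function.update_of_ne h1] at hef
    exact hc w e ((Finset.mem_insert.1 heE).resolve_left h1) f
      ((Finset.mem_insert.1 hfE).resolve_left h2) hwe hwf hef

/-- An edge `ux` of color `b` is recolored with `k`, which frees `b` for the new edge `uv`. -/
lemma proper_insert_shift [DecidableEq W] {E : Finset (Sym2 W)} {c : Sym2 W → Fin 4}
    (hc : Proper E c) {u v x : W} (he : s(u, v) ∉ E) (huv : u ≠ v) (hf : s(u, x) ∈ E) {b k : Fin 4} (hb : c s(u, x) = b)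
    (hvb : Misses E c v b) (huk : Misses E c u k) (hxk : Misses E c x k) :
    ∃ c', Proper (insert s(u, v) E) c' := by
  have hkb : b ≠ k := hb ▸ huk _ hf (Sym2.mem_mk_left u x)
  have key : ∀ w, w ∈ s(u, x) → Misses E c w k := by
    intro w hw
    rcases Sym2.mem_iff.1 hw with rfl | rfl <;> assumption
  have hc1 : Proper E (Function.update c s(u, x) k) := by
    intro w e heE f hfE hwe hwf hef
    by_cases h1 : e = s(u, x) <;> by_cases h2 : f = s(u, x)
    · rw [h1, h2]
    · subst h1
      rw [Function.update_self, Function.update_of_ne h2] at hef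
      exact absurd hef.symm (key w hwe f hfE hwf)
    · subst h2
      rw [Function.update_self, Function.update_of_ne h1] at hef
      exact absurd hef (key w hwf e heE hwe)
    · rw [Function.update_of_ne h2, Function.update_of_ne h1] at hef
      exact hc w e heE f hfE hwe hwf hef
  refine proper_insert hc1 he (k := b) ?_ ?_
  · intro e heE hue h
    by_cases h1 : e = s(u, x)
    · rw [h1, Function.update_self] at h
      exact hkb h.symm
    · rw [Function.update_of_ne h1] at h
      exact h1 (hc u e heE _ hf hue (Sym2.mem_mk_left u x) (h.trans hb.symm))
  · intro e heE hve h
    by_cases h1 : e = s(u, x)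
    · rw [h1, Function.update_self] at h
      exact hkb h.symm
    · rw [Function.update_of_ne h1] at h
      exact hvb e heE hve h

/-- The graph formed by the edges of `E` colored `a` or `b`. -/
def kempe (E : Finset (Sym2 W)) (c : Sym2 W → Fin 4) (a b : Fin 4) : SimpleGraph W where
  Adj p q := p ≠ q ∧ s(p, q) ∈ E ∧ (c s(p, q) = a ∨ c s(p, q) = b)
  symm := ⟨fun p q h => by rw [Sym2.eq_swap]; exact ⟨h.1.symm, h.2⟩⟩
  loopless := ⟨fun _ h => h.1 rfl⟩

/-- Kempe swap: exchanging `a` and `b` on the component of `r` keeps the coloring proper. Around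
a vertex of that component the colors `a` and `b` are exchanged; around any other vertex nothing
changes. -/
lemma kempe_swap {E : Finset (Sym2 W)} {c : Sym2 W → Fin 4} (hc : Proper E c) (a b : Fin 4)
    (r : W) : ∃ c', Proper E c' ∧
      (∀ w, (kempe E c a b).Reachable r w → ∀ e ∈ E, w ∈ e → c' e = Equiv.swap a b (c e)) ∧
      (∀ w, ¬ (kempe E c a b).Reachable r w → ∀ e ∈ E, w ∈ e → c' e = c e) := by
  classical
  let K := kempe E c a b
  let c' : Sym2 W → Fin 4 := fun e =>
    if ∃ w ∈ e, K.Reachable r w then Equiv.swap a b (c e) else c e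
  have h1 : ∀ w, K.Reachable r w → ∀ e ∈ E, w ∈ e → c' e = Equiv.swap a b (c e) :=
    fun w hw e _ hwe => if_pos ⟨w, hwe, hw⟩
  have h2 : ∀ w, ¬ K.Reachable r w → ∀ e ∈ E, w ∈ e → c' e = c e := by
    intro w hw e he hwe
    by_cases hex : ∃ z ∈ e, K.Reachable r z
    · have : c' e = Equiv.swap a b (c e) := if_pos hex
      rw [this]
      obtain ⟨z, hze, hz⟩ := hex
      have hzw : z ≠ w := by rintro rfl; exact hw hz
      have hes : e = s(z, w) := ((Sym2.mem_and_mem_iff hzw).1 ⟨hze, hwe⟩)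
      -- otherwise `e` would join `w` to the component of `r`
      have hcol : ¬ (c e = a ∨ c e = b) := by
        intro hab
        refine hw (hz.trans (SimpleGraph.Adj.reachable ?_))
        subst hes
        exact ⟨hzw, he, hab⟩
      push Not at hcol
      exact Equiv.swap_apply_of_ne_of_ne hcol.1 hcol.2
    · exact if_neg hex
  refine ⟨c', ?_, h1, h2⟩
  intro w e he f hf hwe hwf hef
  by_cases hw : K.Reachable r w
  · rw [h1 w hw e he hwe, h1 w hw f hf hwf] at hef
    exact hc w e he f hf hwe hwf ((Equiv.swap a b).injective hef)
  · rw [h2 w hw e he hwe, h2 w hw f hf hwf] at hef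
    exact hc w e he f hf hwe hwf hef

end Proper

/-! ### Degrees in the two-colored subgraph -/

/-- In a graph of maximum degree at most two, three distinct vertices of degree at most one are
not all in the same component: a component with `n` vertices has at least `n - 1` edges, but here
its degree sum would be at most `2 n - 3`. -/
lemma not_three_ends {W : Type*} [Fintype W] (K : SimpleGraph W) [DecidableRel K.Adj]
    (h2 : ∀ w, K.degree w ≤ 2) {u v x : W} (huv : u ≠ v) (hux : u ≠ x) (hvx : v ≠ x)
    (hu : K.degree u ≤ 1) (hv : K.degree v ≤ 1) (hx : K.degree x ≤ 1)
    (ruv : K.Reachable u v) (rux : K.Reachable u x) : False := by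
  classical
  let C := K.connectedComponentMk u
  let H := K.induce C.supp
  have hconn : H.Connected := C.connected_toSimpleGraph
  have hcard := hconn.card_vert_le_card_edgeSet_add_one
  have hsum := H.sum_degrees_eq_twice_card_edges
  have hdeg : ∀ w : C.supp, H.degree w ≤ K.degree w.1 := by
    intro w
    rw [← SimpleGraph.card_neighborFinset_eq_degree, ← SimpleGraph.card_neighborFinset_eq_degree]
    refine Finset.card_le_card_of_injOn Subtype.val ?_ Subtype.val_injective.injOn
    intro z hz
    simpa [H] using hz
  let u' : C.supp := ⟨u, rfl⟩
  let v' : C.supp := ⟨v, SimpleGraph.ConnectedComponent.sound ruv.symm⟩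
  let x' : C.supp := ⟨x, SimpleGraph.ConnectedComponent.sound rux.symm⟩
  let T : Finset C.supp := {u', v', x'}
  have hT : T.card = 3 := by
    exact Finset.card_eq_three.2 ⟨u', v', x', fun h => huv (congrArg Subtype.val h),
      fun h => hux (congrArg Subtype.val h), fun h => hvx (congrArg Subtype.val h), rfl⟩
  have hle : ∑ w, (H.degree w + if w ∈ T then 1 else 0) ≤ ∑ _w : C.supp, 2 := by
    refine Finset.sum_le_sum fun w _ => ?_
    have hw := hdeg w
    split_ifs with h
    · simp only [T, Finset.mem_insert, Finset.mem_singleton] at h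
      rcases h with rfl | rfl | rfl
      · exact Nat.succ_le_succ (hw.trans hu)
      · exact Nat.succ_le_succ (hw.trans hv)
      · exact Nat.succ_le_succ (hw.trans hx)
    · exact hw.trans (h2 w)
  rw [Finset.sum_add_distrib, hsum] at hle
  simp only [Finset.sum_ite_mem, Finset.univ_inter, Finset.sum_const, hT, Finset.card_univ,
    smul_eq_mul] at hle
  rw [Nat.card_eq_fintype_card, Nat.card_eq_fintype_card, ← SimpleGraph.edgeFinset_card] at hcard
  omega

section Coloring

variable {W : Type*}

lemma kempe_degree_le [Fintype W] {E : Finset (Sym2 W)} {c : Sym2 W → Fin 4}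
    (hc : Proper E c) (a b : Fin 4) [DecidableRel (kempe E c a b).Adj] (w : W) (S : Finset (Fin 4))
    (hS : ∀ e ∈ E, w ∈ e → c e = a ∨ c e = b → c e ∈ S) :
    (kempe E c a b).degree w ≤ S.card := by
  rw [← SimpleGraph.card_neighborFinset_eq_degree]
  refine Finset.card_le_card_of_injOn (fun q => c s(w, q)) ?_ ?_
  · intro q hq
    have hq : (kempe E c a b).Adj w q := by simpa using hq
    exact hS _ hq.2.1 (Sym2.mem_mk_left _ _) hq.2.2
  · intro p hp q hq hpq
    have hp : (kempe E c a b).Adj w p := by simpa using hp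
    have hq : (kempe E c a b).Adj w q := by simpa using hq
    exact Sym2.congr_right.1
      (hc w _ hp.2.1 _ hq.2.1 (Sym2.mem_mk_left _ _) (Sym2.mem_mk_left _ _) hpq)

/-- The set of colors missing at a vertex has at least `4 - deg` elements. -/
lemma card_missing [DecidableEq W] (E : Finset (Sym2 W)) (c : Sym2 W → Fin 4) (w : W) :
    ∃ M : Finset (Fin 4), (∀ k, k ∈ M ↔ Misses E c w k) ∧
      4 ≤ M.card + (E.filter (w ∈ ·)).card := by
  refine ⟨((E.filter (w ∈ ·)).image c)ᶜ, ?_, ?_⟩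
  · intro k
    simp [Misses]
  · have h1 := Finset.card_compl_add_card ((E.filter (w ∈ ·)).image c)
    have h2 : ((E.filter (w ∈ ·)).image c).card ≤ (E.filter (w ∈ ·)).card := Finset.card_image_le
    simp only [Fintype.card_fin] at h1
    omega

/-! ### Four colors suffice for subcubic graphs -/

lemma extend_step [Fintype W] [DecidableEq W] {E : Finset (Sym2 W)} {c : Sym2 W → Fin 4}
    (hc : Proper E c) {u v : W} (huv : u ≠ v) (he : s(u, v) ∉ E) (hloop : ∀ e ∈ E, ¬ e.IsDiag)
    (hdeg : ∀ w, ((insert s(u, v) E).filter (w ∈ ·)).card ≤ 3) :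
    ∃ c', Proper (insert s(u, v) E) c' := by
  classical
  by_cases hcommon : ∃ k, Misses E c u k ∧ Misses E c v k
  · obtain ⟨k, h1, h2⟩ := hcommon
    exact proper_insert hc he h1 h2
  push Not at hcommon
  obtain ⟨Mu, hMu, cMu⟩ := card_missing E c u
  obtain ⟨Mv, hMv, cMv⟩ := card_missing E c v
  have hdeg2 : ∀ w, w ∈ s(u, v) → (E.filter (w ∈ ·)).card ≤ 2 := by
    intro w hw
    have h := hdeg w
    rw [Finset.filter_insert, if_pos hw, Finset.card_insert_of_notMem (by simp [he])] at h
    omega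
  have du := hdeg2 u (Sym2.mem_mk_left _ _)
  have dv := hdeg2 v (Sym2.mem_mk_right _ _)
  have hdisj : Disjoint Mu Mv := by
    rw [Finset.disjoint_left]
    intro k hk hk'
    exact hcommon k ((hMu k).1 hk) ((hMv k).1 hk')
  have hun : Mu ∪ Mv = Finset.univ := by
    rw [← Finset.card_eq_iff_eq_univ, Fintype.card_fin]
    apply le_antisymm ((Finset.card_le_univ _).trans (by simp))
    rw [Finset.card_union_of_disjoint hdisj]
    omega
  obtain ⟨a, ha⟩ : Mu.Nonempty := Finset.card_pos.1 (by omega)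
  obtain ⟨b, hb⟩ : Mv.Nonempty := Finset.card_pos.1 (by omega)
  rw [hMu] at ha
  rw [hMv] at hb
  have hub : ¬ Misses E c u b := fun h => hcommon b h hb
  unfold Misses at hub
  push Not at hub
  obtain ⟨f, hf, huf, hfb⟩ := hub
  obtain ⟨x, rfl⟩ := Sym2.mem_iff_exists.1 huf
  have hux : u ≠ x := fun h => hloop _ hf (by simpa using h)
  have hvx : v ≠ x := by
    rintro rfl
    exact he hf
  obtain ⟨Mx, hMx, cMx⟩ := card_missing E c x
  have dx : (E.filter (x ∈ ·)).card ≤ 3 :=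
    (Finset.card_le_card (Finset.filter_subset_filter _ (Finset.subset_insert _ _))).trans (hdeg x)
  obtain ⟨k, hk⟩ : Mx.Nonempty := Finset.card_pos.1 (by omega)
  rw [hMx] at hk
  by_cases huk : Misses E c u k
  · exact proper_insert_shift hc he huv hf hfb hb huk hk
  have hvk : Misses E c v k := by
    have := Finset.mem_univ k
    rw [← hun, Finset.mem_union, hMu, hMv] at this
    exact this.resolve_left huk
  have hbk : b ≠ k := hfb ▸ hk _ hf (Sym2.mem_mk_right u x)
  have hba : b ≠ a := hfb ▸ ha _ hf (Sym2.mem_mk_left u x)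
  by_cases ruv : (kempe E c a k).Reachable u v
  · have rux : ¬ (kempe E c a k).Reachable u x := by
      intro rux
      refine not_three_ends (kempe E c a k) ?_ huv hux hvx ?_ ?_ ?_ ruv rux
      · intro w
        refine (kempe_degree_le hc a k w {a, k} ?_).trans Finset.card_le_two
        intro e _ _ h
        simpa using h
      · refine (kempe_degree_le hc a k u {k} ?_)
        intro e he hw h
        simpa using h.resolve_left (ha e he hw)
      · refine (kempe_degree_le hc a k v {a} ?_)
        intro e he hw h
        simpa using h.resolve_right (hvk e he hw)
      · refine (kempe_degree_le hc a k x {a} ?_)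
        intro e he hw h
        simpa using h.resolve_right (hk e he hw)
    -- swap at `x`, leaving the colors at `u` and `v` alone: now `x` and `u` both miss `a`
    obtain ⟨c', hc', hin, hout⟩ := kempe_swap hc a k x
    have hu' := hout u fun h => rux h.symm
    have hv' := hout v fun h => rux (ruv.trans h.symm)
    refine proper_insert_shift hc' he huv hf (b := b) (k := a) ?_ ?_ ?_ ?_
    · rw [hu' _ hf huf, hfb]
    · intro e he hw
      rw [hv' e he hw]
      exact hb e he hw
    · intro e he hw
      rw [hu' e he hw]
      exact ha e he hw
    · intro e he hw h
      rw [hin x (SimpleGraph.Reachable.refl _) e he hw, Equiv.swap_apply_eq_iff,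
        Equiv.swap_apply_left] at h
      exact hk e he hw h
  · -- swap at `u`, leaving the colors at `v` alone: now `u` and `v` both miss `k`
    obtain ⟨c', hc', hin, hout⟩ := kempe_swap hc a k u
    refine proper_insert hc' he (k := k) ?_ ?_
    · intro e he hw h
      rw [hin u (SimpleGraph.Reachable.refl _) e he hw, Equiv.swap_apply_eq_iff,
        Equiv.swap_apply_right] at h
      exact ha e he hw h
    · intro e he hw
      rw [hout v ruv e he hw]
      exact hvk e he hw

lemma exists_proper [Fintype W] [DecidableEq W] (E : Finset (Sym2 W))
    (hloop : ∀ e ∈ E, ¬ e.IsDiag)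
    (hdeg : ∀ w, (E.filter (w ∈ ·)).card ≤ 3) : ∃ c, Proper E c := by
  induction E using Finset.induction_on with
  | empty => exact ⟨fun _ => 0, fun w e he => by simp at he⟩
  | insert e E he ih =>
    obtain ⟨c, hc⟩ := ih (fun e h => hloop e (Finset.mem_insert_of_mem h)) fun w =>
      (Finset.card_le_card (Finset.filter_subset_filter _ (Finset.subset_insert _ _))).trans
        (hdeg w)
    induction e with
    | h u v =>
      have huv : u ≠ v := fun h => hloop _ (Finset.mem_insert_self _ _) (by simpa using h)
      exact extend_step hc huv he (fun e h => hloop e (Finset.mem_insert_of_mem h)) hdeg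

end Coloring

/-! ### Splitting vertices -/

/-- A set of at least two elements splits into `⌊#s / 2⌋` classes of size at most three. -/
lemma exists_split {V : Type*} [DecidableEq V] (s : Finset V) (hs : 2 ≤ s.card) :
    ∃ idx : V → ℕ, (∀ v, idx v < s.card / 2) ∧
      ∀ i, (s.filter (fun v => idx v = i)).card ≤ 3 := by
  classical
  let f : V → ℕ := fun v => if h : v ∈ s then (s.equivFin ⟨v, h⟩ : ℕ) else 0
  have hf : ∀ v ∈ s, f v < s.card := by
    intro v hv
    simp only [f, dif_pos hv]
    exact Fin.isLt _
  have hinj : Set.InjOn f s := by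
    intro v hv w hw h
    simp only [f, dif_pos (Finset.mem_coe.1 hv), dif_pos (Finset.mem_coe.1 hw)] at h
    simpa using s.equivFin.injective (Fin.ext h)
  refine ⟨fun v => min (f v / 2) (s.card / 2 - 1), fun v => by dsimp only; omega, fun i => ?_⟩
  have : (Finset.Ico (2 * i) (2 * i + 3)).card = 3 := by simp
  rw [← this]
  refine Finset.card_le_card_of_injOn f ?_ (hinj.mono (Finset.filter_subset _ _))
  intro v hv
  simp only [Finset.coe_filter, Set.mem_ofPred_eq] at hv
  have := hf v hv.1
  simp only [Finset.coe_Ico, Set.mem_Ico]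
  omega

end MajorityColoring

open MajorityColoring in
/-- Every finite simple graph of minimum degree at least `2` has a majority
`4`-edge-coloring: for every vertex `u` and every color `α`, at most half the edges
incident with `u` have color `α`. -/
theorem majority_four_edge_coloring {V : Type*} [Fintype V] [DecidableEq V]
    (G : SimpleGraph V) [DecidableRel G.Adj] (hmin : ∀ v : V, 2 ≤ G.degree v) :
    ∃ c : Sym2 V → Fin 4, ∀ u : V, ∀ α : Fin 4,
      2 * ((G.incidenceFinset u).filter (fun e => c e = α)).card ≤ G.degree u := by
  classical
  have hsplit := fun u => exists_split (G.neighborFinset u) (by simpa using hmin u)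
  choose idx hidx hclass using hsplit
  simp only [SimpleGraph.card_neighborFinset_eq_degree] at hidx
  have hlt : ∀ u v, idx u v < Fintype.card V := fun u v =>
    (hidx u v).trans_le ((Nat.div_le_self _ _).trans (G.degree_lt_card_verts u).le)
  -- the part of `u` that carries the edge `uv`
  let p : V → V → V × Fin (Fintype.card V) := fun u v => (u, ⟨idx u v, hlt u v⟩)
  let H : SimpleGraph (V × Fin (Fintype.card V)) :=
    { Adj := fun x y => G.Adj x.1 y.1 ∧ x = p x.1 y.1 ∧ y = p y.1 x.1
      symm := ⟨fun x y h => ⟨h.1.symm, h.2.2, h.2.1⟩⟩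
      loopless := ⟨fun x h => G.loopless.irrefl _ h.1⟩ }
  have hHdeg : ∀ w, (H.edgeFinset.filter (w ∈ ·)).card ≤ 3 := by
    intro w
    rw [← SimpleGraph.incidenceFinset_eq_filter, SimpleGraph.card_incidenceFinset_eq_degree,
      ← SimpleGraph.card_neighborFinset_eq_degree]
    refine le_trans ?_ (hclass w.1 w.2)
    refine Finset.card_le_card_of_injOn Prod.fst ?_ ?_
    · intro y hy
      have hy : H.Adj w y := by simpa using hy
      have h2 : w.2 = (p w.1 y.1).2 := congrArg Prod.snd hy.2.1
      simp only [Finset.coe_filter, Set.mem_ofPred_eq, SimpleGraph.mem_neighborFinset]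
      exact ⟨hy.1, by rw [h2]⟩
    · intro y hy z hz hyz
      have hy : H.Adj w y := by simpa using hy
      have hz : H.Adj w z := by simpa using hz
      rw [hy.2.2, hz.2.2, hyz]
  obtain ⟨c, hc⟩ := exists_proper H.edgeFinset
    (fun e he => H.not_isDiag_of_mem_edgeSet (by simpa using he)) hHdeg
  have hadj : ∀ u v, G.Adj u v → s(p u v, p v u) ∈ H.edgeFinset := by
    intro u v h
    rw [SimpleGraph.mem_edgeFinset, SimpleGraph.mem_edgeSet]
    exact ⟨h, rfl, rfl⟩
  refine ⟨Sym2.lift ⟨fun u v => c s(p u v, p v u), fun u v => congrArg c Sym2.eq_swap⟩, ?_⟩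
  intro u α
  suffices h : ((G.incidenceFinset u).filter (fun e => Sym2.lift
      ⟨fun u v => c s(p u v, p v u), fun u v => congrArg c Sym2.eq_swap⟩ e = α)).card
        ≤ G.degree u / 2 by omega
  -- the edges of color `α` at `u` lie at different parts of `u`
  let N := (G.neighborFinset u).filter (fun v => c s(p u v, p v u) = α)
  have hN : N.card ≤ G.degree u / 2 := by
    rw [← Finset.card_range (G.degree u / 2)]
    refine Finset.card_le_card_of_injOn (idx u) (fun v _ => by simpa using hidx u v) ?_
    intro v hv w hw hvw
    simp only [N, Finset.coe_filter, Set.mem_ofPred_eq, SimpleGraph.mem_neighborFinset] at hv hw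
    have hp : p u v = p u w := by simp only [p, hvw]
    have h := hc (p u v) _ (hadj u v hv.1) _ (hadj u w hw.1) (Sym2.mem_mk_left _ _)
      (hp ▸ Sym2.mem_mk_left _ _) (hv.2.trans hw.2.symm)
    rw [hp] at h
    exact congrArg Prod.fst (Sym2.congr_right.1 h)
  refine le_trans (le_trans (Finset.card_le_card ?_)
    (Finset.card_image_le (s := N) (f := fun v => s(u, v)))) hN
  intro e he
  rw [Finset.mem_filter, SimpleGraph.mem_incidenceFinset] at he
  obtain ⟨⟨heG, hue⟩, hα⟩ := he
  obtain ⟨v, rfl⟩ := Sym2.mem_iff_exists.1 hue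
  refine Finset.mem_image.2 ⟨v, ?_, rfl⟩
  simp only [N, Finset.mem_filter, SimpleGraph.mem_neighborFinset]
  exact ⟨heG, hα⟩
end

section
/- Every finite simple graph of minimum degree at least 4 has a majority 3-edge-coloring. -/
/-!
Colour a subgraph `H ≤ G` with the third colour and split the edges of `F = G \ H` between the
other two. If `b v` is the difference of the numbers of edges of the first two colours at `v`, the
majority condition at `v` reads `2 * deg H v ≤ deg G v` and `|b v| ≤ deg H v`.

*Choice of `H`.* Require `deg H v ≤ ⌊deg G v / 2⌋` everywhere and `1 ≤ deg H v` where `deg G v` is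
odd. Hall's theorem provides such an `H`: every vertex of odd degree (hence of degree at least `5`)
selects a neighbour so that `w` is selected at most `⌊deg G w / 2⌋ - 1` times, which is possible as
`d ≤ 5 (⌊d / 2⌋ - 1)` for all `d ≥ 4` (`exists_assignment`). Now take `H` maximal with these
properties. Then every edge of `F` has an end `v` with `deg H v = ⌊deg G v / 2⌋ ≥ 2`
(`exists_maximal_third_color`); such a `v` tolerates `|b v| ≤ 2`.

*Colouring `F`.* Join an extra vertex to all vertices of odd degree in `F`, so that all degrees are
even, and colour an Eulerian circuit of each component alternately, starting at the extra vertex if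
the component contains it and at a tolerant vertex otherwise (`balanced_coloring`). Vertices other
than the starting point are balanced in the extended graph. So `|b v| ≤ 1` if `deg F v` is odd, in
which case `1 ≤ deg H v`, and otherwise `b v = 0`, or `v` is tolerant and `|b v| ≤ 2`.
-/

open Finset

/-! ### Alternating colourings along closed trails -/

open Classical in
/-- The sum of the weights `χ` over the edges of `F` at the vertex `v`. -/
noncomputable def edgeSum {W : Type*} [Fintype W] (F : SimpleGraph W) (χ : Sym2 W → ℤ)
    (v : W) : ℤ :=
  ∑ w, if F.Adj v w then χ s(v, w) else 0

open Classical in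
/-- Colouring the edges of a trail alternately with `1` and `-1` leaves every vertex balanced, apart
from contributions `1` at the start and `±1` at the end (which add up if these coincide). -/
theorem trail_alternate {W : Type*} [Fintype W] {F : SimpleGraph W} {u v : W}
    (p : F.Walk u v) (hp : p.IsTrail) :
    ∃ χ : Sym2 W → ℤ, ∃ s : ℤ, (∀ e, χ e = 1 ∨ χ e = -1) ∧ (s = 1 ∨ s = -1) ∧
      ∀ x, (∑ w, if s(x, w) ∈ p.edges then χ s(x, w) else 0)
        = (if x = u then 1 else 0) + s * (if x = v then 1 else 0) := by
  induction p with
  | nil => exact ⟨fun _ => 1, -1, by simp, by simp, fun x => by simp; split_ifs <;> rfl⟩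
  | @cons u w v h q ih =>
    rw [SimpleGraph.Walk.isTrail_cons] at hp
    obtain ⟨χ, s, hχ, hs, hsum⟩ := ih hp.1
    refine ⟨fun e => if e = s(u, w) then 1 else - χ e, -s, ?_, ?_, ?_⟩
    · intro e
      have := hχ e
      dsimp only
      split_ifs <;> grind
    · grind
    · intro x
      have h1 : (∑ y, if s(x, y) = s(u, w) then (1 : ℤ) else 0)
          = (if x = u then 1 else 0) + (if x = w then 1 else 0) := by
        have : ∀ y, (if s(x, y) = s(u, w) then (1 : ℤ) else 0)
            = (if y = w then (if x = u then 1 else 0) else 0)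
              + (if y = u then (if x = w then 1 else 0) else 0) := by
          intro y
          have := h.ne
          simp only [Sym2.eq_iff]
          grind
        simp only [this, sum_add_distrib, sum_ite_eq', mem_univ, if_true]
      have h2 : ∀ y, (if s(x, y) ∈ (SimpleGraph.Walk.cons h q).edges then
            (if s(x, y) = s(u, w) then 1 else - χ s(x, y)) else 0)
          = (if s(x, y) = s(u, w) then (1 : ℤ) else 0)
            - (if s(x, y) ∈ q.edges then χ s(x, y) else 0) := by
        intro y
        have := hp.2
        simp only [SimpleGraph.Walk.edges_cons, List.mem_cons]
        grind
      simp only [h2, sum_sub_distrib, h1, hsum]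
      ring

theorem edgeSum_parity {W : Type*} [Fintype W] (F : SimpleGraph W) (χ : Sym2 W → ℤ)
    (hχ : ∀ e, χ e = 1 ∨ χ e = -1) (v : W) :
    Even (edgeSum F χ v) ↔ Even (edgeSum F (fun _ => 1) v) := by
  classical
  rw [← Int.even_sub]
  simp only [edgeSum, ← sum_sub_distrib]
  rw [even_iff_two_dvd]
  refine dvd_sum fun w _ => ?_
  have := hχ s(v, w)
  split_ifs <;> grind

/-- In a graph with all degrees even, a longest trail is closed and uses every edge at each of its
vertices: otherwise it could be extended, after rotating it to end at a vertex with an unused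
edge. -/
theorem exists_closed_saturated_trail {W : Type*} [Fintype W] (F : SimpleGraph W)
    (heven : ∀ v, Even (edgeSum F (fun _ => 1) v)) {a b : W} (hab : F.Adj a b) :
    ∃ u, ∃ p : F.Walk u u, p.IsTrail ∧ 0 < p.length ∧
      ∀ x ∈ p.support, ∀ y, F.Adj x y → s(x, y) ∈ p.edges := by
  classical
  let P : ℕ → Prop := fun n => ∃ u v, ∃ p : F.Walk u v, p.IsTrail ∧ p.length = n
  have hP1 : P 1 := ⟨a, b, hab.toWalk, by simp [SimpleGraph.Walk.isTrail_def], by simp⟩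
  have hbd : ∀ n, P n → n ≤ #F.edgeFinset := by
    rintro n ⟨u, v, p, hp, rfl⟩
    exact hp.length_le_card_edgeFinset
  have hm : P (Nat.findGreatest P #F.edgeFinset) := Nat.findGreatest_spec (hbd 1 hP1) hP1
  have hmax : ∀ n, P n → n ≤ Nat.findGreatest P #F.edgeFinset :=
    fun n hn => Nat.le_findGreatest (hbd n hn) hn
  obtain ⟨u, v, p, hp, hlen⟩ := hm
  rw [← hlen] at hmax
  have hend : ∀ {u₁ v₁} (q : F.Walk u₁ v₁), q.IsTrail → q.length = p.length →
      ∀ y, F.Adj v₁ y → s(v₁, y) ∈ q.edges := by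
    intro u₁ v₁ q hq hql y hy
    by_contra hne
    have := hmax (q.length + 1) ⟨u₁, y, q.concat hy, by
      rw [SimpleGraph.Walk.isTrail_def, SimpleGraph.Walk.edges_concat, List.concat_eq_append,
        List.nodup_append]
      refine ⟨hq.edges_nodup, by simp, ?_⟩
      grind, by simp⟩
    omega
  have huv : u = v := by
    by_contra hne
    obtain ⟨χ, s, hχ, hs, hsum⟩ := trail_alternate p hp
    have h1 : edgeSum F χ v = s := by
      have h2 := hsum v
      rw [if_neg (Ne.symm hne), if_pos rfl, zero_add, mul_one] at h2
      rw [← h2, edgeSum]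
      refine sum_congr rfl fun w _ => ?_
      have : F.Adj v w ↔ s(v, w) ∈ p.edges :=
        ⟨hend p hp rfl w, fun h => p.adj_of_mem_edges h⟩
      simp only [this]
    have h3 := (edgeSum_parity F χ hχ v).2 (heven v)
    rw [h1] at h3
    rcases hs with rfl | rfl <;> revert h3 <;> decide
  subst huv
  refine ⟨u, p, hp, hmax 1 hP1, fun x hx y hy => ?_⟩
  have := hend (p.rotate x hx) (hp.rotate hx) (by
    rw [← SimpleGraph.Walk.length_edges, ← SimpleGraph.Walk.length_edges]
    exact (p.rotate_edges x hx).perm.length_eq) y hy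
  exact (p.rotate_edges x hx).mem_iff.1 this

/-- In a graph with all degrees even and in which every edge has an end that is `o` or lies in `R`,
the edges have a `±1`-colouring balanced at every vertex other than `o`, except for an imbalance of
at most `2` at some vertices of `R` not adjacent to `o`. The proof removes one Eulerian component
at a time. The non-adjacency to `o` reflects that `o` itself serves as the starting point in its
component. -/
theorem balanced_coloring {W : Type*} [Fintype W] (o : W) (R : W → Prop) (F : SimpleGraph W)
    (heven : ∀ v, Even (edgeSum F (fun _ => 1) v))
    (hR : ∀ v w, F.Adj v w → v = o ∨ w = o ∨ R v ∨ R w) :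
    ∃ χ : Sym2 W → ℤ, (∀ e, χ e = 1 ∨ χ e = -1) ∧
      ∀ v, v ≠ o → edgeSum F χ v = 0 ∨ (R v ∧ ¬ F.Adj v o ∧ |edgeSum F χ v| ≤ 2) := by
  classical
  induction F using WellFoundedLT.induction with
  | ind F ih =>
  by_cases hE : ∃ a b, F.Adj a b
  swap
  · push Not at hE
    exact ⟨fun _ => 1, by simp, fun v _ => Or.inl (by simp [edgeSum, hE])⟩
  obtain ⟨a, b, hab⟩ := hE
  obtain ⟨u, p, hp, hpos, hsat⟩ := exists_closed_saturated_trail F heven hab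
  -- The starting point of the circuit, where an imbalance of `2` may occur.
  obtain ⟨r, hr, hroot⟩ : ∃ r ∈ p.support, r = o ∨ (R r ∧ o ∉ p.support) := by
    by_cases ho : o ∈ p.support
    · exact ⟨o, ho, Or.inl rfl⟩
    obtain ⟨e, he⟩ : ∃ e, e ∈ p.edges := by
      apply List.exists_mem_of_length_pos
      simpa using hpos
    induction e with | _ x y =>
    have hx := p.fst_mem_support_of_mem_edges he
    have hy := p.snd_mem_support_of_mem_edges he
    rcases hR x y (p.adj_of_mem_edges he) with rfl | rfl | h | h
    · exact absurd hx ho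
    · exact absurd hy ho
    · exact ⟨x, hx, Or.inr ⟨h, ho⟩⟩
    · exact ⟨y, hy, Or.inr ⟨h, ho⟩⟩
  have hed : ∀ e, e ∈ (p.rotate r hr).edges ↔ e ∈ p.edges :=
    fun e => (p.rotate_edges r hr).mem_iff
  obtain ⟨χ₁, s, hχ₁, hs, hsum⟩ := trail_alternate (p.rotate r hr) (hp.rotate hr)
  simp only [hed] at hsum
  let F₂ := F.deleteEdges {e | e ∈ p.edges}
  have hadj : ∀ x y, F₂.Adj x y ↔ F.Adj x y ∧ s(x, y) ∉ p.edges := by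
    intro x y
    simp [F₂]
  have hin : ∀ x ∈ p.support, ∀ y, ¬ F₂.Adj x y := by
    intro x hx y h
    rw [hadj] at h
    exact h.2 (hsat x hx y h.1)
  have hout : ∀ x, x ∉ p.support → ∀ y, s(x, y) ∉ p.edges := by
    intro x hx y h
    exact hx (p.fst_mem_support_of_mem_edges h)
  have hlt : F₂ < F := by
    refine lt_of_le_of_ne (SimpleGraph.deleteEdges_le _) ?_
    intro heq
    obtain ⟨e, he⟩ : ∃ e, e ∈ p.edges := by
      apply List.exists_mem_of_length_pos
      simpa using hpos
    induction e with | _ x y =>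
    have h1 := p.adj_of_mem_edges he
    rw [← heq, hadj] at h1
    exact h1.2 he
  have hev₂ : ∀ v, Even (edgeSum F₂ (fun _ => 1) v) := by
    intro v
    by_cases hv : v ∈ p.support
    · simp [edgeSum, hin v hv]
    · have := heven v
      simpa [edgeSum, hadj, hout v hv] using this
  obtain ⟨χ₂, hχ₂, h₂⟩ := ih F₂ hlt hev₂ (fun v w h => hR v w ((hadj v w).1 h).1)
  refine ⟨fun e => if e ∈ p.edges then χ₁ e else χ₂ e, ?_, ?_⟩
  · intro e
    dsimp only
    split_ifs
    exacts [hχ₁ e, hχ₂ e]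
  intro v hvo
  by_cases hv : v ∈ p.support
  · have hF : ∀ w, F.Adj v w ↔ s(v, w) ∈ p.edges :=
      fun w => ⟨hsat v hv w, fun h => p.adj_of_mem_edges h⟩
    have h3 : edgeSum F (fun e => if e ∈ p.edges then χ₁ e else χ₂ e) v
        = (if v = r then 1 else 0) + s * (if v = r then 1 else 0) := by
      rw [← hsum v, edgeSum]
      refine sum_congr rfl fun w _ => ?_
      simp only [hF]
      split_ifs <;> rfl
    rw [h3]
    by_cases hvr : v = r
    · subst hvr
      right
      have h4 := hroot.resolve_left hvo
      refine ⟨h4.1, fun h => h4.2 (p.snd_mem_support_of_mem_edges (hsat v hv o h)), ?_⟩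
      rcases hs with rfl | rfl <;> simp
    · left
      simp [hvr]
  · have h3 : edgeSum F (fun e => if e ∈ p.edges then χ₁ e else χ₂ e) v = edgeSum F₂ χ₂ v := by
      simp [edgeSum, hadj, hout v hv]
    rw [h3]
    have := h₂ v hvo
    simpa [hadj, hout v hv] using this

/-! ### The third colour class -/

open Classical in
/-- The degree of `v` in `F`, computed with classical decidability. -/
noncomputable def deg {W : Type*} [Fintype W] (F : SimpleGraph W) (v : W) : ℕ :=
  #{w | F.Adj v w}

theorem deg_eq_card {W : Type*} [Fintype W] (F : SimpleGraph W) (v : W)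
    [DecidablePred (F.Adj v)] : deg F v = #{w | F.Adj v w} := by
  rw [deg]
  congr

theorem deg_eq_degree {W : Type*} [Fintype W] (F : SimpleGraph W) [DecidableRel F.Adj] (v : W) :
    deg F v = F.degree v := by
  classical
  rw [← SimpleGraph.card_neighborFinset_eq_degree, SimpleGraph.neighborFinset_eq_filter, deg]
  congr

theorem edgeSum_one {W : Type*} [Fintype W] (F : SimpleGraph W) (v : W) :
    edgeSum F (fun _ => 1) v = deg F v := by
  classical
  simp [edgeSum, deg]

/-- Every vertex of odd degree can select a neighbour so that no vertex `w` is selected more than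
`⌊deg G w / 2⌋ - 1` times. This is Hall's theorem with each `w` copied that many times. -/
theorem exists_assignment {V : Type*} [Fintype V] (G : SimpleGraph V)
    (hmin : ∀ v, 4 ≤ deg G v) :
    ∃ f : {v // Odd (deg G v)} → V, (∀ v, G.Adj v.1 (f v)) ∧
      ∀ w, Nat.card {v // f v = w} ≤ deg G w / 2 - 1 := by
  classical
  let t : {v // Odd (deg G v)} → Finset (Σ w : V, Fin (deg G w / 2 - 1)) :=
    fun v => ({w | G.Adj v.1 w} : Finset V).sigma fun _ => univ
  have hall : ∀ s : Finset {v // Odd (deg G v)}, #s ≤ #(s.biUnion t) := by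
    intro s
    let N : Finset V := s.biUnion fun v => ({w | G.Adj v.1 w} : Finset V)
    have hbi : s.biUnion t = N.sigma fun _ => univ := by
      ext ⟨w, i⟩
      simp [t, N]
    rw [hbi, card_sigma]
    simp only [card_univ, Fintype.card_fin]
    -- Double count the edges between `s` and its neighbourhood `N`.
    have h1 : 5 * #s ≤ ∑ v ∈ s, deg G v.1 := by
      rw [mul_comm, ← smul_eq_mul]
      refine card_nsmul_le_sum _ _ _ fun v _ => ?_
      have h4 := hmin v.1
      have hodd := v.2
      rcases hodd with ⟨k, hk⟩
      omega
    have h2 : ∑ v ∈ s, deg G v.1 ≤ ∑ w ∈ N, deg G w := by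
      have e1 : ∀ v ∈ s, deg G v.1 = #(N.bipartiteAbove (fun v w => G.Adj v.1 w) v) := by
        intro v hv
        rw [deg]
        congr 1
        ext w
        simp only [mem_filter, mem_univ, true_and, mem_bipartiteAbove, N, mem_biUnion]
        exact ⟨fun h => ⟨⟨v, hv, h⟩, h⟩, fun h => h.2⟩
      rw [sum_congr rfl e1, sum_card_bipartiteAbove_eq_sum_card_bipartiteBelow]
      refine sum_le_sum fun w _ => ?_
      rw [deg]
      refine card_le_card_of_injOn (fun v => v.1) ?_ (Subtype.val_injective.injOn)
      intro v hv
      simp only [coe_filter, Set.mem_ofPred_eq, mem_univ, true_and, coe_bipartiteBelow] at hv ⊢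
      exact hv.2.symm
    have h3 : ∑ w ∈ N, deg G w ≤ 5 * ∑ w ∈ N, (deg G w / 2 - 1) := by
      rw [mul_sum]
      refine sum_le_sum fun w _ => ?_
      have := hmin w
      omega
    omega
  obtain ⟨g, hg, hgt⟩ := (Finset.all_card_le_biUnion_card_iff_exists_injective t).1 hall
  refine ⟨fun v => (g v).1, fun v => ?_, fun w => ?_⟩
  · have := hgt v
    simpa [t] using this
  · have h : #{v | (g v).1 = w} ≤ #(({w} : Finset V).sigma
        fun w => (univ : Finset (Fin (deg G w / 2 - 1)))) := by
      refine card_le_card_of_injOn g ?_ hg.injOn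
      intro v hv
      simpa using hv
    rw [Nat.card_eq_fintype_card, Fintype.card_subtype]
    simpa using h

/-- Take the edges joining each vertex of odd degree to its selected neighbour: a vertex lies on at
most one edge that it selects itself, and on at most `⌊deg G v / 2⌋ - 1` others. -/
theorem exists_third_color {V : Type*} [Fintype V] (G : SimpleGraph V)
    (hmin : ∀ v, 4 ≤ deg G v) :
    ∃ H : SimpleGraph V, H ≤ G ∧ (∀ v, deg H v ≤ deg G v / 2) ∧
      (∀ v, Odd (deg G v) → 1 ≤ deg H v) := by
  classical
  obtain ⟨f, hf, hcard⟩ := exists_assignment G hmin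
  let H : SimpleGraph V := SimpleGraph.fromRel fun a b => ∃ h, f ⟨a, h⟩ = b
  have hH : ∀ a b, H.Adj a b ↔ (∃ h, f ⟨a, h⟩ = b) ∨ ∃ h, f ⟨b, h⟩ = a := by
    intro a b
    simp only [H, SimpleGraph.fromRel_adj, and_iff_right_iff_imp]
    rintro (⟨h, rfl⟩ | ⟨h, rfl⟩)
    · exact (hf ⟨a, h⟩).ne
    · exact (hf ⟨b, h⟩).ne'
  refine ⟨H, ?_, ?_, ?_⟩
  · intro a b hab
    rw [hH] at hab
    rcases hab with ⟨h, rfl⟩ | ⟨h, rfl⟩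
    · exact hf ⟨a, h⟩
    · exact (hf ⟨b, h⟩).symm
  · intro v
    have hsub : ({w | H.Adj v w} : Finset V) ⊆
        ({w | ∃ h, f ⟨v, h⟩ = w} : Finset V) ∪ ({w | ∃ h, f ⟨w, h⟩ = v} : Finset V) := by
      intro w hw
      simpa [hH] using hw
    have h1 : #({w | ∃ h, f ⟨v, h⟩ = w} : Finset V) ≤ 1 := by
      rw [card_le_one]
      intro a ha b hb
      simp only [mem_filter, mem_univ, true_and] at ha hb
      obtain ⟨_, rfl⟩ := ha
      obtain ⟨_, rfl⟩ := hb
      rfl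
    have h2 : #({w | ∃ h, f ⟨w, h⟩ = v} : Finset V) ≤ deg G v / 2 - 1 := by
      refine le_trans ?_ (hcard v)
      rw [Nat.card_eq_fintype_card, Fintype.card_subtype]
      refine le_trans (card_le_card (t := image (fun x => x.1) {x | f x = v}) ?_) card_image_le
      intro w hw
      simp only [mem_filter, mem_univ, true_and] at hw
      obtain ⟨h, hw⟩ := hw
      simp only [mem_image, mem_filter, mem_univ, true_and]
      exact ⟨⟨w, h⟩, hw, rfl⟩
    have h3 := (card_le_card hsub).trans (card_union_le _ _)
    have h4 := hmin v
    rw [deg_eq_card]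
    omega
  · intro v hv
    rw [deg, Nat.one_le_iff_ne_zero, card_ne_zero]
    exact ⟨f ⟨v, hv⟩, by simpa [hH] using Or.inl hv⟩

/-- By maximality of `H`, no edge of `G \ H` can be added without exceeding the degree bound at one
of its ends. -/
theorem exists_maximal_third_color {V : Type*} [Fintype V] (G : SimpleGraph V)
    (hmin : ∀ v, 4 ≤ deg G v) :
    ∃ H : SimpleGraph V, H ≤ G ∧ (∀ v, deg H v ≤ deg G v / 2) ∧
      (∀ v, Odd (deg G v) → 1 ≤ deg H v) ∧
      ∀ u v, (G \ H).Adj u v → deg H u = deg G u / 2 ∨ deg H v = deg G v / 2 := by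
  classical
  obtain ⟨H₀, hH₀⟩ := exists_third_color G hmin
  obtain ⟨H, -, hH⟩ := Finite.exists_le_maximal (p := fun H : SimpleGraph V => H ≤ G ∧
    (∀ v, deg H v ≤ deg G v / 2) ∧ (∀ v, Odd (deg G v) → 1 ≤ deg H v)) hH₀
  obtain ⟨⟨hle, hup, hlow⟩, hmax⟩ := hH
  refine ⟨H, hle, hup, hlow, fun u v huv => ?_⟩
  by_contra hcon
  push Not at hcon
  rw [SimpleGraph.sdiff_adj] at huv
  have hmono : ∀ x, deg H x ≤ deg (H ⊔ SimpleGraph.edge u v) x := by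
    intro x
    refine card_le_card fun y hy => ?_
    simp only [mem_filter, mem_univ, true_and] at hy ⊢
    exact Or.inl hy
  have hadj : ∀ x y, (H ⊔ SimpleGraph.edge u v).Adj x y →
      H.Adj x y ∨ (x = u ∧ y = v) ∨ (x = v ∧ y = u) := by
    intro x y h
    rw [SimpleGraph.sup_adj, SimpleGraph.edge_adj] at h
    grind
  have hstep : ∀ x z, (∀ y, (H ⊔ SimpleGraph.edge u v).Adj x y → H.Adj x y ∨ y = z) →
      deg (H ⊔ SimpleGraph.edge u v) x ≤ deg H x + 1 := by
    intro x z hz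
    refine le_trans (card_le_card (t := insert z ({y | H.Adj x y} : Finset V)) ?_)
      (card_insert_le _ _)
    intro y hy
    simp only [mem_filter, mem_univ, true_and, mem_insert] at hy ⊢
    exact (hz y hy).symm
  have hnew := hmax (y := H ⊔ SimpleGraph.edge u v) ⟨?_, ?_, ?_⟩ le_sup_left
  · apply huv.2
    apply hnew
    rw [SimpleGraph.sup_adj, SimpleGraph.edge_adj]
    exact Or.inr ⟨Or.inl ⟨rfl, rfl⟩, huv.1.ne⟩
  · intro x y h
    rcases hadj x y h with h | ⟨rfl, rfl⟩ | ⟨rfl, rfl⟩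
    exacts [hle h, huv.1, huv.1.symm]
  · intro x
    have hx := hup x
    by_cases hxu : x = u
    · subst hxu
      have := hstep x v fun y hy => by have := hadj x y hy; have := huv.1.ne; grind
      have := hcon.1
      omega
    by_cases hxv : x = v
    · subst hxv
      have := hstep x u fun y hy => by have := hadj x y hy; have := huv.1.ne; grind
      have := hcon.2
      omega
    refine le_trans (card_le_card fun y hy => ?_) hx
    simp only [mem_filter, mem_univ, true_and] at hy ⊢
    have := hadj x y hy
    grind
  · exact fun x hx => (hlow x hx).trans (hmono x)

/-! ### Two-colouring the remaining edges -/

/-- The graph on `Option V` obtained from `F` by joining the new vertex `none` to the vertices of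
odd degree, so that every degree becomes even. -/
noncomputable def evenClosure {V : Type*} [Fintype V] (F : SimpleGraph V) :
    SimpleGraph (Option V) :=
  SimpleGraph.fromRel fun a b => match a, b with
    | some a, some b => F.Adj a b
    | none, some a => Odd (deg F a)
    | _, none => False

theorem evenClosure_some_some {V : Type*} [Fintype V] (F : SimpleGraph V) (a b : V) :
    (evenClosure F).Adj (some a) (some b) ↔ F.Adj a b := by
  simp only [evenClosure, SimpleGraph.fromRel_adj, F.adj_comm b a, or_self, and_iff_right_iff_imp]
  intro h
  simpa using h.ne

theorem evenClosure_some_none {V : Type*} [Fintype V] (F : SimpleGraph V) (a : V) :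
    (evenClosure F).Adj (some a) none ↔ Odd (deg F a) := by
  simp [evenClosure]

theorem evenClosure_even {V : Type*} [Fintype V] (F : SimpleGraph V) (x : Option V) :
    Even (edgeSum (evenClosure F) (fun _ => 1) x) := by
  classical
  cases x with
  | none =>
    have h := F.even_card_odd_degree_vertices
    have : edgeSum (evenClosure F) (fun _ => 1) none = #{v | Odd (F.degree v)} := by
      rw [edgeSum, Fintype.sum_option]
      simp [SimpleGraph.adj_comm _ none (some _), evenClosure_some_none, deg_eq_degree]
    rw [this]
    exact_mod_cast h
  | some a =>
    have h1 := edgeSum_one F a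
    have h2 : edgeSum (evenClosure F) (fun _ => 1) (some a)
        = (if Odd (deg F a) then 1 else 0) + edgeSum F (fun _ => 1) a := by
      rw [edgeSum, Fintype.sum_option]
      simp [edgeSum, evenClosure_some_none, evenClosure_some_some]
    rw [h2, h1]
    split_ifs with h
    · have : Odd (deg F a : ℤ) := by exact_mod_cast h
      exact odd_one.add_odd this
    · rw [Nat.not_odd_iff_even] at h
      simpa using h

/-- `balanced_coloring` applied to `evenClosure F` with `o = none`. At a vertex of odd degree the
edge to `none` is discarded, leaving an imbalance of one. -/
theorem exists_two_coloring {V : Type*} [Fintype V] (F : SimpleGraph V) (R : V → Prop)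
    (hR : ∀ v w, F.Adj v w → R v ∨ R w) :
    ∃ χ : Sym2 V → ℤ, (∀ e, χ e = 1 ∨ χ e = -1) ∧
      ∀ v, (|edgeSum F χ v| ≤ 1 ∧ Odd (deg F v)) ∨ edgeSum F χ v = 0 ∨
        (R v ∧ |edgeSum F χ v| ≤ 2) := by
  classical
  obtain ⟨χ, hχ, hb⟩ := balanced_coloring none (fun x => ∃ v, x = some v ∧ R v) (evenClosure F)
    (evenClosure_even F) (by
      intro x y h
      cases x with
      | none => simp
      | some a =>
        cases y with
        | none => simp
        | some b =>
          rw [evenClosure_some_some] at h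
          simpa using hR a b h)
  refine ⟨fun e => χ (e.map some), fun e => hχ _, fun v => ?_⟩
  have hsum : edgeSum (evenClosure F) χ (some v)
      = (if Odd (deg F v) then χ s(some v, none) else 0)
        + edgeSum F (fun e => χ (e.map some)) v := by
    simp [edgeSum, Fintype.sum_option, evenClosure_some_none, evenClosure_some_some]
  have h := hb (some v) (by simp)
  rw [evenClosure_some_none, hsum] at h
  by_cases hodd : Odd (deg F v)
  · left
    refine ⟨?_, hodd⟩
    simp only [hodd, if_true, not_true, false_and, and_false, or_false] at h
    have h1 := hχ s(some v, none)
    rw [abs_le]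
    constructor <;> rcases h1 with h1 | h1 <;> rw [h1] at h <;> linarith
  · right
    simpa [hodd] using h

/-! ### The majority colouring -/

/-- Every finite simple graph of minimum degree at least `4` has a majority
`3`-edge-coloring: for every vertex `u` and every color `α`, at most half the edges
incident with `u` have color `α`. -/
theorem majority_three_edge_coloring {V : Type*} [Fintype V] [DecidableEq V]
    (G : SimpleGraph V) [DecidableRel G.Adj] (hmin : ∀ v : V, 4 ≤ G.degree v) :
    ∃ c : Sym2 V → Fin 3, ∀ u : V, ∀ α : Fin 3,
      2 * ((G.incidenceFinset u).filter (fun e => c e = α)).card ≤ G.degree u := by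
  classical
  simp only [← deg_eq_degree] at hmin ⊢
  obtain ⟨H, hle, hup, hlow, hmax⟩ := exists_maximal_third_color G hmin
  obtain ⟨χ, hχ, hb⟩ := exists_two_coloring (G \ H) (fun v => deg H v = deg G v / 2) hmax
  let c : Sym2 V → Fin 3 := fun e => if e ∈ H.edgeSet then 2 else if χ e = 1 then 0 else 1
  refine ⟨c, fun u α => ?_⟩
  have hcount : #((G.incidenceFinset u).filter (fun e => c e = α))
      = #{w | G.Adj u w ∧ c s(u, w) = α} := by
    symm
    refine card_bij (fun w _ => s(u, w)) ?_ ?_ ?_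
    · intro w hw
      simpa using hw
    · intro a _ b _ h
      exact Sym2.congr_right.1 h
    · intro e he
      induction e with | _ x y =>
      simp only [mem_filter, SimpleGraph.mem_incidenceFinset,
        SimpleGraph.mk'_mem_incidenceSet_iff] at he
      obtain ⟨⟨hxy, rfl | rfl⟩, hc⟩ := he
      · exact ⟨y, by simp [hxy, hc], rfl⟩
      · exact ⟨x, by simp [hxy.symm, ← hc, Sym2.eq_swap (a := x)], Sym2.eq_swap⟩
  have hdeg : deg G u = deg H u + deg (G \ H) u := by
    rw [deg_eq_card, deg_eq_card, deg_eq_card, ← card_union_of_disjoint]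
    · congr 1
      ext w
      have := @hle u w
      simp only [mem_filter, mem_univ, true_and, mem_union, SimpleGraph.sdiff_adj]
      tauto
    · rw [disjoint_filter]
      intro w _ h
      simp [h]
  have hbal : |edgeSum (G \ H) χ u| ≤ deg H u := by
    have h4 := hmin u
    rcases hb u with ⟨h1, h2⟩ | h1 | ⟨h1, h2⟩
    · refine h1.trans ?_
      have : 1 ≤ deg H u := by
        by_cases hodd : Odd (deg G u)
        · exact hlow u hodd
        -- Here `deg G u` is even and `deg (G \ H) u` odd, so `deg H u` is odd.
        · grind
      exact_mod_cast this
    · simp [h1]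
    · omega
  have hsum : ∀ ε : ℤ, (ε = 1 ∨ ε = -1) →
      2 * (#{w | (G \ H).Adj u w ∧ χ s(u, w) = ε} : ℤ)
        = deg (G \ H) u + ε * edgeSum (G \ H) χ u := by
    intro ε hε
    rw [← edgeSum_one, edgeSum, edgeSum, mul_sum, ← sum_add_distrib, card_filter, Nat.cast_sum,
      mul_sum]
    refine sum_congr rfl fun w _ => ?_
    have := hχ s(u, w)
    by_cases hw : (G \ H).Adj u w
    · rcases hε with rfl | rfl <;> rcases this with h | h <;> simp [hw, h]
    · simp [hw]
  rw [abs_le] at hbal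
  rw [hcount]
  have hcol : ∀ w, c s(u, w) = if H.Adj u w then 2 else if χ s(u, w) = 1 then 0 else 1 := by
    intro w
    simp [c]
  fin_cases α
  · have h := hsum 1 (Or.inl rfl)
    have : #{w | G.Adj u w ∧ c s(u, w) = 0} = #{w | (G \ H).Adj u w ∧ χ s(u, w) = 1} := by
      congr 1
      ext w
      simp only [mem_filter, mem_univ, true_and, hcol, SimpleGraph.sdiff_adj]
      grind
    change 2 * #{w | G.Adj u w ∧ c s(u, w) = 0} ≤ _
    omega
  · have h := hsum (-1) (Or.inr rfl)
    have : #{w | G.Adj u w ∧ c s(u, w) = 1} = #{w | (G \ H).Adj u w ∧ χ s(u, w) = -1} := by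
      congr 1
      ext w
      have := hχ s(u, w)
      simp only [mem_filter, mem_univ, true_and, hcol, SimpleGraph.sdiff_adj]
      grind
    change 2 * #{w | G.Adj u w ∧ c s(u, w) = 1} ≤ _
    omega
  · have : #{w | G.Adj u w ∧ c s(u, w) = 2} = deg H u := by
      rw [deg_eq_card]
      congr 1
      ext w
      have := @hle u w
      simp only [mem_filter, mem_univ, true_and, hcol]
      grind
    have := hup u
    change 2 * #{w | G.Adj u w ∧ c s(u, w) = 2} ≤ _
    omega
end

section
/- For every integer k at least 2, there exists a positive integer δ_k such that every finite simple graph of minimum degree at least δ_k has a (1/k)-majority (k+1)-edge-coloring. -/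
/-!
Orient every edge of `G` arbitrarily and regard an edge as joining the "tail copy" of its first
endpoint to the "head copy" of its second one, so that the edges of `G` form a bipartite graph.
Put `K = k + 1`. A bipartite graph can be edge-coloured with `K` colours so that every colour
appears at most `⌈d / K⌉` times at each vertex of degree `d` (`exists_balanced_coloring`). Hence
at a vertex `u` of `G` with out-degree `p` and in-degree `q`, `p + q = d`, every colour appears
at most `⌈p / K⌉ + ⌈q / K⌉ ≤ (d + 2 k) / (k + 1)` times, which is at most `d / k` as soon as
`d ≥ 2 k ^ 2`.

The balanced colouring comes from splitting every vertex into pieces of degree at most `K`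
(`exists_split`) and applying König's edge-colouring theorem (`exists_konig_coloring`). The latter
is reduced to `K`-regular bipartite multigraphs by padding; these decompose into perfect matchings
by Hall's marriage theorem (`exists_coloring_of_regular`).

Throughout, a bipartite multigraph is given by two maps `a : E → A` and `b : E → B` sending an
edge to its two endpoints.
-/

open Finset

theorem card_filter_of_fiber_card {E A : Type*} [DecidableEq A] (a : E → A) (X : Finset A) (n : ℕ)
    (S : Finset E) (h : ∀ x, #{e ∈ S | a e = x} = n) : #{e ∈ S | a e ∈ X} = #X * n := by
  rw [← Finset.sum_card_fiberwise_eq_card_filter, Finset.sum_congr rfl fun x _ => h x]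
  simp

/-- A `K`-regular bipartite multigraph with edge set `S` has a proper edge colouring with `K`
colours: Hall's theorem yields a perfect matching `m`, which receives the last colour, and the
remaining edges form a `(K - 1)`-regular multigraph. -/
theorem exists_coloring_of_regular {E A B : Type*} [Fintype A] [Fintype B]
    [DecidableEq E] [DecidableEq A] [DecidableEq B] (a : E → A) (b : E → B) (K : ℕ) :
    ∀ S : Finset E, (∀ x, #{e ∈ S | a e = x} = K) → (∀ y, #{e ∈ S | b e = y} = K) →
      ∃ c : E → ℕ, (∀ e ∈ S, c e < K) ∧
        (∀ e ∈ S, ∀ f ∈ S, c e = c f → a e = a f → e = f) ∧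
        (∀ e ∈ S, ∀ f ∈ S, c e = c f → b e = b f → e = f) := by
  induction K with
  | zero =>
    intro S ha _
    have hS : ∀ e, e ∉ S := by
      intro e he
      have := Finset.card_eq_zero.mp (ha (a e))
      have h2 : e ∈ ({e' ∈ S | a e' = a e} : Finset E) := by simp [he]
      rw [this] at h2
      simp at h2
    exact ⟨fun _ => 0, fun e he => absurd he (hS e), fun e he => absurd he (hS e),
      fun e he => absurd he (hS e)⟩
  | succ K ih =>
    intro S ha hb
    -- Hall's condition: the `(K + 1) |X|` edges leaving `X` all end in the neighbourhood of `X`.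
    have hall : ∀ X : Finset A,
        #X ≤ #(X.biUnion fun x => ({e ∈ S | a e = x} : Finset E).image b) := by
      intro X
      set N := X.biUnion fun x => ({e ∈ S | a e = x} : Finset E).image b with hN
      have h1 : #{e ∈ S | a e ∈ X} = #X * (K + 1) :=
        card_filter_of_fiber_card a X (K + 1) S ha
      have h2 : #{e ∈ S | b e ∈ N} = #N * (K + 1) :=
        card_filter_of_fiber_card b N (K + 1) S hb
      have h3 : #{e ∈ S | a e ∈ X} ≤ #{e ∈ S | b e ∈ N} := by
        apply Finset.card_le_card
        intro e he
        simp only [Finset.mem_filter] at he ⊢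
        refine ⟨he.1, ?_⟩
        rw [hN, Finset.mem_biUnion]
        exact ⟨a e, he.2, Finset.mem_image_of_mem _ (by simp [he.1])⟩
      rw [h1, h2] at h3
      exact Nat.le_of_mul_le_mul_right h3 (Nat.succ_pos K)
    obtain ⟨f, hfi, hf⟩ :=
      (Finset.all_card_le_biUnion_card_iff_exists_injective _).mp hall
    have hm : ∀ x, ∃ e, e ∈ S ∧ a e = x ∧ b e = f x := by
      intro x
      have := hf x
      simp only [Finset.mem_image, Finset.mem_filter] at this
      obtain ⟨e, ⟨h1, h2⟩, h3⟩ := this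
      exact ⟨e, h1, h2, h3⟩
    choose m hmS hma hmb using hm
    have hcard : Fintype.card A = Fintype.card B := by
      have h1 := card_filter_of_fiber_card a univ (K + 1) S ha
      have h2 := card_filter_of_fiber_card b univ (K + 1) S hb
      simp only [Finset.mem_univ, Finset.filter_true, Finset.card_univ] at h1 h2
      exact Nat.eq_of_mul_eq_mul_right (Nat.succ_pos K) (h1.symm.trans h2)
    have hfb : Function.Bijective f :=
      (Fintype.bijective_iff_injective_and_card f).mpr ⟨hfi, hcard⟩
    set M := (univ : Finset A).image m with hM
    have hmM : ∀ x, m x ∈ M := fun x => Finset.mem_image_of_mem _ (Finset.mem_univ x)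
    have hMm : ∀ e ∈ M, ∃ x, m x = e := by
      intro e he
      simpa [hM] using he
    have ha' : ∀ x, #{e ∈ S \ M | a e = x} = K := by
      intro x
      have : ({e ∈ S \ M | a e = x} : Finset E) = ({e ∈ S | a e = x} : Finset E).erase (m x) := by
        ext e
        simp only [Finset.mem_filter, Finset.mem_sdiff, Finset.mem_erase]
        constructor
        · rintro ⟨⟨h1, h2⟩, h3⟩
          exact ⟨fun h => h2 (h ▸ hmM x), h1, h3⟩
        · rintro ⟨h1, h2, h3⟩
          refine ⟨⟨h2, fun h => ?_⟩, h3⟩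
          obtain ⟨z, rfl⟩ := hMm e h
          rw [hma] at h3
          exact h1 (by rw [h3])
      rw [this, Finset.card_erase_of_mem (by simp [hmS, hma]), ha]
      rfl
    have hb' : ∀ y, #{e ∈ S \ M | b e = y} = K := by
      intro y
      obtain ⟨x, rfl⟩ := hfb.2 y
      have : ({e ∈ S \ M | b e = f x} : Finset E)
          = ({e ∈ S | b e = f x} : Finset E).erase (m x) := by
        ext e
        simp only [Finset.mem_filter, Finset.mem_sdiff, Finset.mem_erase]
        constructor
        · rintro ⟨⟨h1, h2⟩, h3⟩
          exact ⟨fun h => h2 (h ▸ hmM x), h1, h3⟩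
        · rintro ⟨h1, h2, h3⟩
          refine ⟨⟨h2, fun h => ?_⟩, h3⟩
          obtain ⟨z, rfl⟩ := hMm e h
          rw [hmb] at h3
          exact h1 (by rw [hfi h3])
      rw [this, Finset.card_erase_of_mem (by simp [hmS, hmb]), hb]
      rfl
    obtain ⟨c, hc, hca, hcb⟩ := ih (S \ M) ha' hb'
    refine ⟨fun e => if e ∈ M then K else c e, ?_, ?_, ?_⟩
    · intro e he
      by_cases h : e ∈ M
      · simp [h]
      · have := hc e (by simp [he, h])
        simp only [h, if_false]
        omega
    · intro e he g hg hcol hag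
      by_cases h : e ∈ M <;> by_cases h' : g ∈ M <;> simp only [h, h', if_true, if_false] at hcol
      · obtain ⟨x, rfl⟩ := hMm e h
        obtain ⟨z, rfl⟩ := hMm g h'
        rw [hma, hma] at hag
        rw [hag]
      · have := hc g (by simp [hg, h'])
        omega
      · have := hc e (by simp [he, h])
        omega
      · exact hca e (by simp [he, h]) g (by simp [hg, h']) hcol hag
    · intro e he g hg hcol hag
      by_cases h : e ∈ M <;> by_cases h' : g ∈ M <;> simp only [h, h', if_true, if_false] at hcol
      · obtain ⟨x, rfl⟩ := hMm e h
        obtain ⟨z, rfl⟩ := hMm g h'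
        rw [hmb, hmb] at hag
        rw [hfi hag]
      · have := hc g (by simp [hg, h'])
        omega
      · have := hc e (by simp [he, h])
        omega
      · exact hcb e (by simp [he, h]) g (by simp [hg, h']) hcol hag

/-- **König's edge-colouring theorem**: a bipartite multigraph of maximum degree at most `K` has a
proper edge colouring with `K` colours. The multigraph is made `K`-regular by taking a second copy
with the two sides exchanged, and joining each vertex `v` to its twin by `K - deg v` new edges. -/
theorem exists_konig_coloring {E A B : Type*} [Fintype E] [Fintype A] [Fintype B]
    [DecidableEq E] [DecidableEq A] [DecidableEq B] (a : E → A) (b : E → B) (K : ℕ)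
    (ha : ∀ x, #{e | a e = x} ≤ K) (hb : ∀ y, #{e | b e = y} ≤ K) :
    ∃ c : E → ℕ, (∀ e, c e < K) ∧ (∀ e f, c e = c f → a e = a f → e = f) ∧
      (∀ e f, c e = c f → b e = b f → e = f) := by
  let P := Σ x : A, Fin (K - #{e | a e = x})
  let Q := Σ y : B, Fin (K - #{e | b e = y})
  -- The summands of the edge set are: the graph, its flipped copy, and the two families of new
  -- edges, at the vertices of `A` and of `B`.
  let a' : (E ⊕ E) ⊕ (P ⊕ Q) → A ⊕ B :=
    Sum.elim (Sum.elim (fun e => Sum.inl (a e)) (fun e => Sum.inr (b e)))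
      (Sum.elim (fun p => Sum.inl p.1) (fun q => Sum.inr q.1))
  let b' : (E ⊕ E) ⊕ (P ⊕ Q) → B ⊕ A :=
    Sum.elim (Sum.elim (fun e => Sum.inl (b e)) (fun e => Sum.inr (a e)))
      (Sum.elim (fun p => Sum.inr p.1) (fun q => Sum.inl q.1))
  have hP : ∀ x, #{p : P | p.1 = x} = K - #{e | a e = x} := by
    intro x
    have : ({p : P | p.1 = x} : Finset P) = univ.map (Function.Embedding.sigmaMk x) := by
      ext ⟨z, i⟩
      simp only [Finset.mem_filter, Finset.mem_univ, true_and, Finset.mem_map]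
      constructor
      · rintro rfl
        exact ⟨i, rfl⟩
      · rintro ⟨j, hj⟩
        exact (congrArg Sigma.fst hj).symm
    rw [this]
    simp
  have hQ : ∀ y, #{q : Q | q.1 = y} = K - #{e | b e = y} := by
    intro x
    have : ({p : Q | p.1 = x} : Finset Q) = univ.map (Function.Embedding.sigmaMk x) := by
      ext ⟨z, i⟩
      simp only [Finset.mem_filter, Finset.mem_univ, true_and, Finset.mem_map]
      constructor
      · rintro rfl
        exact ⟨i, rfl⟩
      · rintro ⟨j, hj⟩
        exact (congrArg Sigma.fst hj).symm
    rw [this]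
    simp
  have ha' : ∀ x, #{e ∈ (univ : Finset ((E ⊕ E) ⊕ (P ⊕ Q))) | a' e = x} = K := by
    rintro (x | y)
    · have h1 := ha x
      have h2 := hP x
      rw [Finset.card_filter] at h1 h2 ⊢
      rw [Finset.card_filter] at h2
      simp only [Fintype.sum_sum_type, a', Sum.elim_inl, Sum.elim_inr, Sum.inl.injEq,
        reduceCtorEq, if_false, Finset.sum_const_zero]
      omega
    · have h1 := hb y
      have h2 := hQ y
      rw [Finset.card_filter] at h1 h2 ⊢
      rw [Finset.card_filter] at h2
      simp only [Fintype.sum_sum_type, a', Sum.elim_inl, Sum.elim_inr, Sum.inr.injEq,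
        reduceCtorEq, if_false, Finset.sum_const_zero]
      omega
  have hb' : ∀ x, #{e ∈ (univ : Finset ((E ⊕ E) ⊕ (P ⊕ Q))) | b' e = x} = K := by
    rintro (y | x)
    · have h1 := hb y
      have h2 := hQ y
      rw [Finset.card_filter] at h1 h2 ⊢
      rw [Finset.card_filter] at h2
      simp only [Fintype.sum_sum_type, b', Sum.elim_inl, Sum.elim_inr, Sum.inl.injEq,
        reduceCtorEq, if_false, Finset.sum_const_zero]
      omega
    · have h1 := ha x
      have h2 := hP x
      rw [Finset.card_filter] at h1 h2 ⊢
      rw [Finset.card_filter] at h2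
      simp only [Fintype.sum_sum_type, b', Sum.elim_inl, Sum.elim_inr, Sum.inr.injEq,
        reduceCtorEq, if_false, Finset.sum_const_zero]
      omega
  obtain ⟨c, hc, hca, hcb⟩ := exists_coloring_of_regular a' b' K univ ha' hb'
  refine ⟨fun e => c (Sum.inl (Sum.inl e)), fun e => hc _ (Finset.mem_univ _), ?_, ?_⟩
  · intro e f h1 h2
    have := hca _ (Finset.mem_univ _) _ (Finset.mem_univ _) h1 (by simp [a', h2])
    simpa using this
  · intro e f h1 h2
    have := hcb _ (Finset.mem_univ _) _ (Finset.mem_univ _) h1 (by simp [b', h2])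
    simpa using this

/-- Every fibre of `a`, of size `d` say, can be cut into pieces numbered by the `j` with
`j * K < d`, each of size at most `K`; `g e` is the number of the piece containing `e`. -/
theorem exists_split {E A : Type*} [Fintype E] [DecidableEq A] (a : E → A) (K : ℕ)
    (hK : 0 < K) :
    ∃ g : E → ℕ, (∀ e, g e * K < #{f | a f = a e}) ∧
      ∀ x j, #{e | a e = x ∧ g e = j} ≤ K := by
  classical
  let r : E → ℕ := fun e => ((Fintype.equivFin {f // a f = a e}) ⟨e, rfl⟩ : ℕ)
  have hr : ∀ e, r e < #{f | a f = a e} := by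
    intro e
    have := ((Fintype.equivFin {f // a f = a e}) ⟨e, rfl⟩).2
    simpa only [Fintype.card_subtype] using this
  have hrx : ∀ x e (h : a e = x), r e = ((Fintype.equivFin {f // a f = x}) ⟨e, h⟩ : ℕ) := by
    rintro x e rfl
    rfl
  have hri : ∀ e f, a e = a f → r e = r f → e = f := by
    intro e f h1 h2
    rw [hrx (a f) e h1, hrx (a f) f rfl] at h2
    have := (Fintype.equivFin {f' // a f' = a f}).injective (Fin.ext h2)
    exact congrArg Subtype.val this
  refine ⟨fun e => r e / K, fun e => (Nat.div_mul_le_self _ _).trans_lt (hr e), ?_⟩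
  intro x j
  -- Within a piece, an element is determined by the remainder of its rank modulo `K`.
  have : #{e | a e = x ∧ r e / K = j} ≤ #(Finset.range K) := by
    apply Finset.card_le_card_of_injOn (fun e => r e % K)
    · intro e _
      simpa using Nat.mod_lt _ hK
    · intro e he f hf h
      simp only [Finset.coe_filter, Finset.mem_univ, true_and, Set.mem_ofPred_eq] at he hf
      apply hri e f (he.1.trans hf.1.symm)
      have h' : r e % K = r f % K := h
      rw [← Nat.div_add_mod (r e) K, ← Nat.div_add_mod (r f) K, he.2, hf.2, h']
  simpa using this

/-- If the edges at `x` are cut into pieces by `g` and every piece contains at most one edge of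
each colour, then each colour appears at most `⌈d / (k + 1)⌉` times at `x`, where `d` is the degree
of `x`. -/
theorem card_color_le {E A : Type*} [Fintype E] [DecidableEq A] (a : E → A) (g c : E → ℕ) (k : ℕ)
    (hg : ∀ e, g e * (k + 1) < #{f | a f = a e})
    (hc : ∀ e f, c e = c f → a e = a f → g e = g f → e = f) (x : A) (i : ℕ) :
    (k + 1) * #{e | a e = x ∧ c e = i} ≤ #{e | a e = x} + k := by
  have : #{e | a e = x ∧ c e = i} ≤ #(Finset.range ((#{e | a e = x} + k) / (k + 1))) := by
    apply Finset.card_le_card_of_injOn g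
    · intro e he
      simp only [Finset.coe_filter, Finset.mem_univ, true_and, Set.mem_ofPred_eq] at he
      have h := hg e
      rw [he.1] at h
      simp only [Finset.coe_range, Set.mem_Iio]
      rw [Nat.lt_iff_add_one_le, Nat.le_div_iff_mul_le (Nat.succ_pos k)]
      linarith
    · intro e he f hf h
      simp only [Finset.coe_filter, Finset.mem_univ, true_and, Set.mem_ofPred_eq] at he hf
      exact hc e f (he.2.trans hf.2.symm) (he.1.trans hf.1.symm) h
  rw [Finset.card_range] at this
  exact (Nat.mul_le_mul_left _ this).trans (Nat.mul_div_le _ _)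

/-- A bipartite multigraph has an edge colouring with `k + 1` colours in which every colour appears
at most `⌈d / (k + 1)⌉` times at each vertex of degree `d`. -/
theorem exists_balanced_coloring {E A B : Type*} [Fintype E] [Fintype A] [Fintype B]
    [DecidableEq E] [DecidableEq A] [DecidableEq B] (a : E → A) (b : E → B) (k : ℕ) :
    ∃ c : E → ℕ, (∀ e, c e < k + 1) ∧
      (∀ x i, (k + 1) * #{e | a e = x ∧ c e = i} ≤ #{e | a e = x} + k) ∧
      (∀ y i, (k + 1) * #{e | b e = y ∧ c e = i} ≤ #{e | b e = y} + k) := by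
  obtain ⟨g, hg, hg'⟩ := exists_split a (k + 1) (Nat.succ_pos k)
  obtain ⟨h, hh, hh'⟩ := exists_split b (k + 1) (Nat.succ_pos k)
  have hgE : ∀ e, g e < Fintype.card E := fun e =>
    (Nat.le_mul_of_pos_right _ (Nat.succ_pos k)).trans_lt ((hg e).trans_le (Finset.card_le_univ _))
  have hhE : ∀ e, h e < Fintype.card E := fun e =>
    (Nat.le_mul_of_pos_right _ (Nat.succ_pos k)).trans_lt ((hh e).trans_le (Finset.card_le_univ _))
  obtain ⟨c, hc, hca, hcb⟩ := exists_konig_coloring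
    (fun e => ((a e, ⟨g e, hgE e⟩) : A × Fin (Fintype.card E)))
    (fun e => ((b e, ⟨h e, hhE e⟩) : B × Fin (Fintype.card E))) (k + 1)
    (by
      rintro ⟨x, j⟩
      simpa only [Prod.mk.injEq, Fin.ext_iff] using hg' x j)
    (by
      rintro ⟨x, j⟩
      simpa only [Prod.mk.injEq, Fin.ext_iff] using hh' x j)
  refine ⟨c, hc, ?_, ?_⟩
  · exact card_color_le a g c k hg fun e f h1 h2 h3 => hca e f h1 (by simp [h2, h3])
  · exact card_color_le b h c k hh fun e f h1 h2 h3 => hcb e f h1 (by simp [h2, h3])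

/-- For every integer `k ≥ 2` there is a positive integer `δ_k` such that
every finite simple graph of minimum degree at least `δ_k` has a `(1/k)`-majority
`(k+1)`-edge-coloring: for every vertex `u` and every color `α`, at most a `1/k`-fraction
of the edges incident with `u` have color `α`. -/
theorem inv_k_majority_k_add_one_coloring (k : ℕ) (hk : 2 ≤ k) :
    ∃ δ : ℕ, 0 < δ ∧
      ∀ (V : Type) [Fintype V] [DecidableEq V] (G : SimpleGraph V) [DecidableRel G.Adj],
        (∀ v : V, δ ≤ G.degree v) →
        ∃ c : Sym2 V → Fin (k + 1), ∀ u : V, ∀ α : Fin (k + 1),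
          k * ((G.incidenceFinset u).filter (fun e => c e = α)).card ≤ G.degree u := by
  refine ⟨2 * k ^ 2, by positivity, ?_⟩
  intro V _ _ G _ hδ
  -- An arbitrary orientation of the edges.
  have hor : ∀ e : G.edgeFinset, ∃ p : V × V, (e : Sym2 V) = s(p.1, p.2) := by
    rintro ⟨e, he⟩
    induction e with
    | h x y => exact ⟨(x, y), rfl⟩
  choose p hp using hor
  have hne : ∀ e, (p e).1 ≠ (p e).2 := by
    intro e
    have h := e.2
    rw [hp e, SimpleGraph.mem_edgeFinset, SimpleGraph.mem_edgeSet] at h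
    exact h.ne
  obtain ⟨c, hc, hca, hcb⟩ := exists_balanced_coloring (fun e => (p e).1) (fun e => (p e).2) k
  refine ⟨fun e => if h : e ∈ G.edgeFinset then ⟨c ⟨e, h⟩, hc _⟩ else 0, ?_⟩
  intro u α
  set T : Finset G.edgeFinset := {e | (p e).1 = u ∧ c e = α} with hT
  set H : Finset G.edgeFinset := {e | (p e).2 = u ∧ c e = α} with hH
  have hcount : ((G.incidenceFinset u).filter (fun e =>
      (if h : e ∈ G.edgeFinset then (⟨c ⟨e, h⟩, hc _⟩ : Fin (k + 1)) else 0) = α)).card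
      ≤ #T + #H := by
    refine le_trans ?_ (Finset.card_union_le T H)
    rw [← Finset.card_map (Function.Embedding.subtype _)]
    apply Finset.card_le_card
    intro e he
    rw [Finset.mem_filter, SimpleGraph.mem_incidenceFinset] at he
    obtain ⟨⟨he1, he2⟩, he3⟩ := he
    have heE : e ∈ G.edgeFinset := SimpleGraph.mem_edgeFinset.mpr he1
    rw [dif_pos heE] at he3
    have hcol : c ⟨e, heE⟩ = α := congrArg Fin.val he3
    have hpe := hp ⟨e, heE⟩
    simp only at hpe
    rw [hpe, Sym2.mem_iff] at he2
    rw [Finset.mem_map]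
    refine ⟨⟨e, heE⟩, ?_, rfl⟩
    rw [Finset.mem_union, hT, hH]
    simp only [Finset.mem_filter, Finset.mem_univ, true_and]
    rcases he2 with h | h
    · exact Or.inl ⟨h.symm, hcol⟩
    · exact Or.inr ⟨h.symm, hcol⟩
  have hdeg : #{e | (p e).1 = u} + #{e | (p e).2 = u} ≤ G.degree u := by
    rw [← Finset.card_union_of_disjoint, ← SimpleGraph.card_incidenceFinset_eq_degree,
      ← Finset.card_map (Function.Embedding.subtype _)]
    · apply Finset.card_le_card
      intro e he
      rw [Finset.mem_map] at he
      obtain ⟨e, he, rfl⟩ := he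
      rw [SimpleGraph.mem_incidenceFinset]
      refine ⟨SimpleGraph.mem_edgeFinset.mp e.2, ?_⟩
      simp only [Finset.mem_union, Finset.mem_filter, Finset.mem_univ, true_and] at he
      simp only [Function.Embedding.subtype_apply]
      rw [hp e, Sym2.mem_iff]
      exact he.imp Eq.symm Eq.symm
    · rw [Finset.disjoint_filter]
      intro e _ h1 h2
      exact hne e (h1.trans h2.symm)
  have h1 := hca u α
  have h2 := hcb u α
  have h3 := hδ u
  rw [← hT] at h1
  rw [← hH] at h2
  refine le_trans (Nat.mul_le_mul_left k hcount) ?_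
  -- Multiply through by `k + 1` and use `2 k ^ 2 ≤ deg u`.
  have h4 : (k + 1) * (#T + #H) ≤ G.degree u + 2 * k := by linarith
  have h5 : (k + 1) * (k * (#T + #H)) ≤ (k + 1) * G.degree u := by
    nlinarith [Nat.mul_le_mul_left k h4]
  exact Nat.le_of_mul_le_mul_left h5 (Nat.succ_pos k)
end

section
/- Let G be a finite simple graph of minimum degree at least 3, and let D' and A be disjoint sets of vertices of G such that every neighbor of every vertex of D' belongs to A. Then it is possible to select, for every vertex u in D', exactly one edge of G incident with u, in such a way that every vertex v in A is incident with at most ⌊d_G(v)/2⌋ of the selected edges. -/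
/-!
Give every vertex `v` exactly `⌊d(v)/2⌋` slots. By Hall's marriage theorem there is an injective
assignment of the vertices to slots of their neighbors, and each vertex selects the edge to the
neighbor owning its slot. Hall's condition for a vertex set `S` (`hall_condition`) follows by
counting the edges between `S` and `N(S)` in two ways: there are at least `3|S|` incidences, and
at most `∑_{v ∈ N(S)} d(v)`, while `d ≤ 3⌊d/2⌋` for `d ≥ 3`. A vertex of `A` lies outside
the disjoint set of selecting vertices, so it meets a selected edge only as the chosen neighbor.
-/

/-- Hall's condition for the slots: the neighborhood of `S` carries at least `|S|` slots. -/
theorem hall_condition {V : Type*} [Fintype V] [DecidableEq V]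
    (G : SimpleGraph V) [DecidableRel G.Adj] (hmin : ∀ v : V, 3 ≤ G.degree v)
    (S : Finset V) :
    S.card ≤ ∑ v ∈ S.biUnion (fun u => G.neighborFinset u), G.degree v / 2 := by
  set N := S.biUnion (fun u => G.neighborFinset u) with hNdef
  have hcount := Finset.sum_card_bipartiteAbove_eq_sum_card_bipartiteBelow
    (s := S) (t := N) G.Adj
  have hlow : S.card * 3 ≤ ∑ u ∈ S, (N.bipartiteAbove G.Adj u).card := by
    rw [← smul_eq_mul]
    refine Finset.card_nsmul_le_sum _ _ _ fun u hu => (hmin u).trans ?_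
    rw [← G.card_neighborFinset_eq_degree]
    refine Finset.card_le_card fun v hv => ?_
    rw [Finset.mem_bipartiteAbove]
    exact ⟨Finset.mem_biUnion.2 ⟨u, hu, hv⟩, (G.mem_neighborFinset u v).1 hv⟩
  have hup : ∑ v ∈ N, (S.bipartiteBelow G.Adj v).card ≤ ∑ v ∈ N, 3 * (G.degree v / 2) := by
    refine Finset.sum_le_sum fun v _ => ?_
    have h1 : (S.bipartiteBelow G.Adj v).card ≤ G.degree v := by
      rw [← G.card_neighborFinset_eq_degree]
      refine Finset.card_le_card fun u hu => ?_
      rw [Finset.mem_bipartiteBelow] at hu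
      exact (G.mem_neighborFinset v u).2 hu.2.symm
    have := hmin v
    omega
  rw [← Finset.mul_sum] at hup
  omega

/-- Let `G` be a finite simple graph of minimum degree at least `3`, and let
`D'` and `A` be disjoint sets of vertices such that every neighbor of every vertex of `D'`
belongs to `A`.  Then one can select, for every `u ∈ D'`, exactly one edge of `G` incident
with `u`, in such a way that every `v ∈ A` is incident with at most `⌊d_G(v)/2⌋` of the
selected edges. -/
theorem edge_selection_bounded {V : Type*} [Fintype V] [DecidableEq V]
    (G : SimpleGraph V) [DecidableRel G.Adj] (hmin : ∀ v : V, 3 ≤ G.degree v)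
    (D' A : Finset V) (hdisj : Disjoint D' A)
    (hN : ∀ u ∈ D', ∀ v : V, G.Adj u v → v ∈ A) :
    ∃ sel : V → Sym2 V,
      (∀ u ∈ D', sel u ∈ G.incidenceFinset u) ∧
      (∀ v ∈ A, (D'.filter (fun u => v ∈ sel u)).card ≤ G.degree v / 2) := by
  -- Hall's theorem is applied to all of `V`; only the values on `D'` matter below.
  obtain ⟨f, hinj, hf⟩ := (Finset.all_card_le_biUnion_card_iff_exists_injective
    (fun u : V => (G.neighborFinset u).sigma fun v => Finset.range (G.degree v / 2))).1 (by
      intro S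
      refine (hall_condition G hmin S).trans ?_
      have heq : (S.biUnion fun u => (G.neighborFinset u).sigma
            fun v => Finset.range (G.degree v / 2))
          = (S.biUnion fun u => G.neighborFinset u).sigma
            fun v => Finset.range (G.degree v / 2) := by
        ext x
        simp only [Finset.mem_biUnion, Finset.mem_sigma]
        tauto
      rw [heq, Finset.card_sigma]
      simp)
  simp only [Finset.mem_sigma, SimpleGraph.mem_neighborFinset, Finset.mem_range] at hf
  refine ⟨fun u => s(u, (f u).1), fun u _ => ?_, fun v hv => ?_⟩
  · rw [SimpleGraph.mem_incidenceFinset]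
    exact ⟨(hf u).1, Sym2.mem_mk_left _ _⟩
  · have key : ∀ u ∈ D'.filter (fun u => v ∈ s(u, (f u).1)), (f u).1 = v := by
      intro u hu
      rw [Finset.mem_filter, Sym2.mem_iff] at hu
      rcases hu.2 with h | h
      · exact absurd hv (Finset.disjoint_left.1 hdisj (h ▸ hu.1))
      · exact h.symm
    rw [← Finset.card_range (G.degree v / 2)]
    refine Finset.card_le_card_of_injOn (fun u => (f u).2) (fun u hu => ?_) ?_
    · have h := (hf u).2
      rw [key u hu] at h
      exact Finset.mem_coe.2 (Finset.mem_range.2 h)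
    · intro a ha b hb hab
      exact hinj (Sigma.ext ((key a ha).trans (key b hb).symm) (heq_of_eq hab))
end

section
/- Let G be a finite simple graph of minimum degree at least 2, and suppose G has an induced subgraph H such that H has maximum degree at most 3 and chromatic index 4 (that is, H is a class 2 graph of maximum degree 3), and every vertex of H has degree 2 or 3 in G. Then G has no majority 3-edge-coloring. -/
/-!
At a vertex of degree at most `3`, a majority coloring uses each color at most once, since
`2 * k ≤ 3` forces `k ≤ 1`. All edges of the induced subgraph on `S` have both ends of degree at
most `3` in `G`, so a majority `3`-edge-coloring of `G` restricts to a proper `3`-edge-coloring of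
that subgraph, contradicting chromatic index `4`.
-/

/-- A proper edge-coloring of `G` with `n` colors: distinct edges sharing an endpoint
receive distinct colors. -/
def IsProperEdgeColoring {V : Type*} (G : SimpleGraph V) {n : ℕ} (c : Sym2 V → Fin n) :
    Prop :=
  ∀ e₁ ∈ G.edgeSet, ∀ e₂ ∈ G.edgeSet, e₁ ≠ e₂ → (∃ v : V, v ∈ e₁ ∧ v ∈ e₂) → c e₁ ≠ c e₂

/-- The chromatic index of `G`: the least number of colors in a proper edge-coloring. -/
noncomputable def chromaticIndex {V : Type*} (G : SimpleGraph V) : ℕ :=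
  sInf {n : ℕ | ∃ c : Sym2 V → Fin n, IsProperEdgeColoring G c}

/-- Let `G` be a finite simple graph of minimum degree at least `2`, and
suppose `G` has an induced subgraph `H` (induced on a vertex set `S`) of maximum degree at
most `3` and chromatic index `4`, all of whose vertices have degree `2` or `3` in `G`.
Then `G` has no majority `3`-edge-coloring. -/
theorem no_majority_three_coloring_of_class_two_induced {V : Type*} [Fintype V]
    [DecidableEq V] (G : SimpleGraph V) [DecidableRel G.Adj]
    (hmin : ∀ v : V, 2 ≤ G.degree v) (S : Finset V)
    (hmaxH : ∀ v ∈ S, (S.filter (fun w => G.Adj v w)).card ≤ 3)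
    (hchiH : chromaticIndex (G.induce (S : Set V)) = 4)
    (hdeg : ∀ v ∈ S, G.degree v = 2 ∨ G.degree v = 3) :
    ¬ ∃ c : Sym2 V → Fin 3, ∀ u : V, ∀ α : Fin 3,
        2 * ((G.incidenceFinset u).filter (fun e => c e = α)).card ≤ G.degree u := by
  rintro ⟨c, hc⟩
  have hproper : IsProperEdgeColoring (G.induce (S : Set V))
      (fun e => c (e.map Subtype.val)) := by
    rintro e₁ he₁ e₂ he₂ hne ⟨v, hv₁, hv₂⟩ heq
    have hinc : ∀ e ∈ (G.induce (S : Set V)).edgeSet, v ∈ e →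
        e.map Subtype.val ∈ G.incidenceFinset v.1 := by
      intro e he hv
      rw [SimpleGraph.mem_incidenceFinset]
      refine ⟨?_, Sym2.mem_map.2 ⟨v, hv, rfl⟩⟩
      induction e with
      | _ a b => simpa using he
    have htwo : 1 < ((G.incidenceFinset v.1).filter
        (fun e => c e = c (e₁.map Subtype.val))).card :=
      Finset.one_lt_card.2
        ⟨_, Finset.mem_filter.2 ⟨hinc e₁ he₁ hv₁, rfl⟩,
          _, Finset.mem_filter.2 ⟨hinc e₂ he₂ hv₂, heq.symm⟩,
          fun h => hne (Sym2.map.injective Subtype.val_injective h)⟩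
    have hmaj := hc v.1 (c (e₁.map Subtype.val))
    have hd := hdeg v.1 v.2
    omega
  have hle : chromaticIndex (G.induce (S : Set V)) ≤ 3 := Nat.sInf_le ⟨_, hproper⟩
  omega
end

section
/- For every integer k at least 2, every finite simple graph G of minimum degree at least k(k−1) has a (1/k)-majority (k+2)-edge-coloring. -/
/-!
The statement reduces to Vizing's theorem. Let `u` have degree `d = k * q + r` with `r < k`. Since
`d ≥ k * (k - 1)`, we have `r ≤ k - 1 ≤ q`, hence `d ≤ q * (k + 1)`, and `u` can be split into `q`
copies, each keeping at most `k + 1` of the edges at `u`. The split graph is simple with maximum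
degree at most `k + 1`, so by Vizing it has a proper edge-colouring with `k + 2` colours. Each
colour then occurs at most once at each copy, so at most `q = ⌊d / k⌋` times at `u`
(`exists_coloring_of_blocks`).

Vizing's theorem (`vizing`) is proved by adding the vertices one at a time. To add `v` with set `N`
of neighbours among the vertices already present, one recolours the old graph so that distinct
missing colours can be assigned to the vertices of `N` (`extend_to_vertex`). The proof of that step
is by induction on the size of `N`. Give every vertex of `N` a list of two missing colours, except
one vertex that gets a single one, and let `X a` be the set of vertices whose list contains `a`.
Swapping two colours `i`, `j` on a component of the subgraph they span lowers `∑ |X a| ^ 2` as long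
as `|X i| > |X j| + 2`, because a component is a path or a cycle and so contains at most two
vertices of `X i`. At a minimum, all the sizes `|X a|` are within `2` of each other, and their sum
`2 * |N| - 1` is odd and less than twice the number of colours; hence some `X i` is a singleton
`{v}`. Assign `i` to `v`, discard all edges coloured `i`, and continue with the remaining colours.
-/

/-! ### Edge-colourings and two-coloured subgraphs -/

/-- `c` restricts to a proper edge-colouring of `H` with colours in `K`. The values of `c` off the
edges of `H` are irrelevant. -/
structure IsProperOn {V C : Type*} (H : SimpleGraph V) (K : Finset C) (c : Sym2 V → C) : Prop where
  mem : ∀ x y, H.Adj x y → c s(x, y) ∈ K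
  proper : ∀ x y z, H.Adj x y → H.Adj x z → c s(x, y) = c s(x, z) → y = z

/-- `L` assigns to each vertex of `N` a list of colours of `K` missing at that vertex: a single
colour at the exceptional vertex `w`, and two colours elsewhere. -/
structure IsListed {V C : Type*} (H : SimpleGraph V) (c : Sym2 V → C) (K : Finset C)
    (N : Finset V) (w : V) (L : V → Finset C) : Prop where
  subset : ∀ u ∈ N, L u ⊆ K
  missing : ∀ u ∈ N, ∀ a ∈ L u, ∀ y, H.Adj u y → c s(u, y) ≠ a
  card_self : (L w).card = 1
  card_ne : ∀ u ∈ N, u ≠ w → (L u).card = 2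

/-- The spanning subgraph of `H` formed by the edges coloured `i` or `j`. -/
def twoColor {V C : Type*} (H : SimpleGraph V) (c : Sym2 V → C) (i j : C) : SimpleGraph V where
  Adj x y := H.Adj x y ∧ (c s(x, y) = i ∨ c s(x, y) = j)
  symm := ⟨fun x y h => by rw [Sym2.eq_swap]; exact ⟨h.1.symm, h.2⟩⟩
  loopless := ⟨fun x h => H.loopless.irrefl x h.1⟩

section
open Classical Finset

/-- A connected graph of maximum degree at most two has at most two vertices of degree at most one:
it has at least `|V| - 1` edges, so its degrees sum to at least `2 * |V| - 2`. -/
theorem card_component_le {V : Type*} [Fintype V] {A : SimpleGraph V} (hA : A.Connected)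
    (hdeg : ∀ x, A.degree x ≤ 2) : #{x : V | A.degree x ≤ 1} ≤ 2 := by
  have h1 := hA.card_vert_le_card_edgeSet_add_one
  have h2 := A.sum_degrees_eq_twice_card_edges
  have h3 : ∑ x, (A.degree x + if A.degree x ≤ 1 then 1 else 0) ≤ ∑ _x : V, 2 := by
    refine Finset.sum_le_sum fun x _ => ?_
    have := hdeg x
    split_ifs <;> omega
  rw [Finset.sum_add_distrib, h2, ← Finset.card_filter] at h3
  rw [Nat.card_eq_fintype_card, Nat.card_eq_fintype_card, ← SimpleGraph.edgeFinset_card] at h1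
  simp at h3
  omega

variable {V C : Type*} [Fintype V] {H : SimpleGraph V} {K : Finset C} {c : Sym2 V → C}

/-- A component of the subgraph in colours `i` and `j` has at most two vertices that miss `i`. -/
theorem card_missing_le (hc : IsProperOn H K c) (i j : C)
    (S : (twoColor H c i j).ConnectedComponent) (X : Finset V)
    (hX : ∀ u ∈ X, ∀ y, H.Adj u y → c s(u, y) ≠ i) :
    #{u ∈ X | (twoColor H c i j).connectedComponentMk u = S} ≤ 2 := by
  set A := S.toSimpleGraph with hAdef
  have hA : A.Connected := S.connected_toSimpleGraph
  have hadj : ∀ x y, A.Adj x y →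
      H.Adj x y ∧ (c s((x : V), (y : V)) = i ∨ c s((x : V), (y : V)) = j) :=
    fun x y h => h
  have hdeg : ∀ x, A.degree x ≤ 2 := by
    intro x
    rw [← SimpleGraph.card_neighborFinset_eq_degree]
    refine le_trans (Finset.card_le_card_of_injOn (fun y => c s((x : V), (y : V)))
      (t := {i, j}) ?_ ?_) Finset.card_le_two
    · intro y hy
      have := (hadj x y (by simpa using hy)).2
      simpa using this
    · intro y hy z hz h
      exact Subtype.ext (hc.proper _ _ _ (hadj x y (by simpa using hy)).1
        (hadj x z (by simpa using hz)).1 h)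
  have hdeg1 : ∀ x : S, (x : V) ∈ X → A.degree x ≤ 1 := by
    intro x hx
    rw [← SimpleGraph.card_neighborFinset_eq_degree, Finset.card_le_one]
    intro y hy z hz
    have hy := hadj x y (by simpa using hy)
    have hz := hadj x z (by simpa using hz)
    have hy' := hy.2.resolve_left (hX _ hx _ hy.1)
    have hz' := hz.2.resolve_left (hX _ hx _ hz.1)
    exact Subtype.ext (hc.proper _ _ _ hy.1 hz.1 (hy'.trans hz'.symm))
  refine le_trans ?_ (card_component_le hA hdeg)
  refine Finset.card_le_card_of_surjOn (fun x : S => (x : V)) ?_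
  intro u hu
  have hu : u ∈ X ∧ (twoColor H c i j).connectedComponentMk u = S := by simpa using hu
  exact ⟨⟨u, hu.2⟩, by simpa using hdeg1 ⟨u, hu.2⟩ hu.1, rfl⟩

theorem exists_component (A : SimpleGraph V) (X Y : Finset V) (h : #Y < #X) :
    ∃ S : A.ConnectedComponent,
      #{u ∈ Y | A.connectedComponentMk u = S} < #{u ∈ X | A.connectedComponentMk u = S} := by
  by_contra! hcon
  have h1 := Finset.card_eq_sum_card_fiberwise (f := A.connectedComponentMk) (s := X) (t := univ)
    (fun _ _ => by simp)
  have h2 := Finset.card_eq_sum_card_fiberwise (f := A.connectedComponentMk) (s := Y) (t := univ)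
    (fun _ _ => by simp)
  have := Finset.sum_le_sum fun S (_ : S ∈ univ) => hcon S
  omega

/-! ### Balancing the lists by Kempe swaps -/

/-- Exchanging `i` and `j` on one component of the subgraph they span, both in the colouring and in
the lists, keeps the colouring proper and the listed colours missing. -/
theorem kempe_swap {N : Finset V} {w : V} {L : V → Finset C} (hc : IsProperOn H K c)
    (hL : IsListed H c K N w L) {i j : C} (hi : i ∈ K) (hj : j ∈ K)
    (S : (twoColor H c i j).ConnectedComponent) :
    ∃ c' : Sym2 V → C, IsProperOn H K c' ∧ IsListed H c' K N w (fun u =>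
      if (twoColor H c i j).connectedComponentMk u = S then (L u).image (Equiv.swap i j)
      else L u) := by
  let c' : Sym2 V → C := fun e =>
    if ∀ x ∈ e, (twoColor H c i j).connectedComponentMk x = S then Equiv.swap i j (c e) else c e
  have key : ∀ x y, H.Adj x y → c' s(x, y) =
      if (twoColor H c i j).connectedComponentMk x = S then Equiv.swap i j (c s(x, y)) else c s(x, y) := by
    intro x y hxy
    simp only [c', Sym2.mem_iff, forall_eq_or_imp, forall_eq]
    by_cases hij : c s(x, y) = i ∨ c s(x, y) = j
    · have : (twoColor H c i j).connectedComponentMk x = (twoColor H c i j).connectedComponentMk y :=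
        SimpleGraph.ConnectedComponent.eq.2 (SimpleGraph.Adj.reachable ⟨hxy, hij⟩)
      simp [← this]
    · push Not at hij
      simp [Equiv.swap_apply_of_ne_of_ne hij.1 hij.2]
  have hsw : ∀ a ∈ K, Equiv.swap i j a ∈ K := by
    intro a ha
    rw [Equiv.swap_apply_def]
    split_ifs <;> assumption
  refine ⟨c', ⟨?_, ?_⟩, ⟨?_, ?_, ?_, ?_⟩⟩
  · intro x y h
    rw [key x y h]
    split_ifs
    · exact hsw _ (hc.mem x y h)
    · exact hc.mem x y h
  · intro x y z hy hz h
    rw [key x y hy, key x z hz] at h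
    split_ifs at h
    · exact hc.proper x y z hy hz ((Equiv.swap i j).injective h)
    · exact hc.proper x y z hy hz h
  · intro u hu
    split_ifs
    · intro a ha
      obtain ⟨b, hb, rfl⟩ := Finset.mem_image.1 ha
      exact hsw _ (hL.subset u hu hb)
    · exact hL.subset u hu
  · intro u hu a ha y hy
    rw [key u y hy]
    split_ifs at ha ⊢
    · obtain ⟨b, hb, rfl⟩ := Finset.mem_image.1 ha
      exact fun h => hL.missing u hu b hb y hy ((Equiv.swap i j).injective h)
    · exact hL.missing u hu a ha y hy
  · split_ifs
    · rw [Finset.card_image_of_injective _ (Equiv.swap i j).injective, hL.card_self]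
    · exact hL.card_self
  · intro u hu hne
    split_ifs
    · rw [Finset.card_image_of_injective _ (Equiv.swap i j).injective, hL.card_ne u hu hne]
    · exact hL.card_ne u hu hne

/-- The effect of a swap on the potential. If the set `P` contains `p` vertices listing `i` and `q`
vertices listing `j`, the swap lowers `|X i|` and raises `|X j|` by `p - q`. As
`0 < p - q ≤ 2 < |X i| - |X j|`, the sum of squares drops. -/
theorem swap_decreases {V C : Type*} (K : Finset C) (N : Finset V) (L : V → Finset C) (P : V → Prop)
    {i j : C} (hi : i ∈ K) (hj : j ∈ K)
    (hlt : #{u ∈ {u ∈ N | j ∈ L u} | P u} < #{u ∈ {u ∈ N | i ∈ L u} | P u})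
    (hle : #{u ∈ {u ∈ N | i ∈ L u} | P u} ≤ 2)
    (hgap : #{u ∈ N | j ∈ L u} + 2 < #{u ∈ N | i ∈ L u}) :
    ∑ a ∈ K, #{u ∈ N | a ∈ if P u then (L u).image (Equiv.swap i j) else L u} ^ 2 <
      ∑ a ∈ K, #{u ∈ N | a ∈ L u} ^ 2 := by
  have hij : i ≠ j := by rintro rfl; omega
  have hj' : j ∈ K.erase i := Finset.mem_erase.2 ⟨hij.symm, hj⟩
  have hmem : ∀ a u, (a ∈ if P u then (L u).image (Equiv.swap i j) else L u) ↔
      if P u then Equiv.swap i j a ∈ L u else a ∈ L u := by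
    intro a u
    split_ifs
    · rw [Finset.mem_image]
      constructor
      · rintro ⟨b, hb, rfl⟩; simpa using hb
      · intro h; exact ⟨_, h, by simp⟩
    · rfl
  simp only [hmem]
  rw [← Finset.add_sum_erase K _ hi, ← Finset.add_sum_erase K _ hi,
    ← Finset.add_sum_erase _ _ hj', ← Finset.add_sum_erase _ _ hj', ← add_assoc, ← add_assoc]
  have hrest : ∀ a ∈ (K.erase i).erase j,
      #{u ∈ N | if P u then Equiv.swap i j a ∈ L u else a ∈ L u} ^ 2 =
      #{u ∈ N | a ∈ L u} ^ 2 := by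
    intro a ha
    simp only [Finset.mem_erase] at ha
    simp [Equiv.swap_apply_of_ne_of_ne ha.2.1 ha.1]
  rw [Finset.sum_congr rfl hrest]
  simp only [Equiv.swap_apply_left, Equiv.swap_apply_right]
  have hsplit : ∀ (Q R : V → Prop) [DecidablePred Q] [DecidablePred R]
      [DecidablePred fun u => if P u then Q u else R u], #{u ∈ N | if P u then Q u else R u} =
      #{u ∈ {u ∈ N | Q u} | P u} + #{u ∈ {u ∈ N | R u} | ¬ P u} := by
    intro Q R _ _ _
    rw [← Finset.card_filter_add_card_filter_not (s := {u ∈ N | if P u then Q u else R u}) P]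
    congr 2 <;> ext u <;> simp only [Finset.mem_filter] <;> by_cases h : P u <;> simp [h]
  rw [hsplit, hsplit]
  have h1 := Finset.card_filter_add_card_filter_not (s := {u ∈ N | i ∈ L u}) P
  have h2 := Finset.card_filter_add_card_filter_not (s := {u ∈ N | j ∈ L u}) P
  generalize #{u ∈ {u ∈ N | i ∈ L u} | P u} = p at *
  generalize #{u ∈ {u ∈ N | j ∈ L u} | P u} = q at *
  generalize #{u ∈ {u ∈ N | i ∈ L u} | ¬ P u} = r at *
  generalize #{u ∈ {u ∈ N | j ∈ L u} | ¬ P u} = s at *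
  rw [← h1, ← h2]
  rw [← h1, ← h2] at hgap
  refine Nat.add_lt_add_right ?_ _
  obtain ⟨d, rfl⟩ := Nat.exists_eq_add_of_lt hlt
  have hrs : s + 1 ≤ r := by omega
  zify at *
  nlinarith

/-- The lists can be made balanced: any two colours are listed equally often up to `2`. -/
theorem exists_balanced {N : Finset V} {w : V} {L : V → Finset C} (hc : IsProperOn H K c)
    (hL : IsListed H c K N w L) :
    ∃ (c' : Sym2 V → C) (L' : V → Finset C), IsProperOn H K c' ∧ IsListed H c' K N w L' ∧
      ∀ i ∈ K, ∀ j ∈ K, #{u ∈ N | i ∈ L' u} ≤ #{u ∈ N | j ∈ L' u} + 2 := by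
  induction hm : ∑ a ∈ K, #{u ∈ N | a ∈ L u} ^ 2 using Nat.strong_induction_on
    generalizing c L with
  | _ m ih =>
    subst hm
    by_cases hbal : ∀ i ∈ K, ∀ j ∈ K, #{u ∈ N | i ∈ L u} ≤ #{u ∈ N | j ∈ L u} + 2
    · exact ⟨c, L, hc, hL, hbal⟩
    push Not at hbal
    obtain ⟨i, hi, j, hj, hgap⟩ := hbal
    obtain ⟨S, hS⟩ := exists_component (twoColor H c i j) {u ∈ N | i ∈ L u} {u ∈ N | j ∈ L u}
      (by omega)
    obtain ⟨c', hc', hL'⟩ := kempe_swap hc hL hi hj S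
    refine ih _ ?_ hc' hL' rfl
    refine swap_decreases K N L _ hi hj hS (card_missing_le hc i j S _ ?_) hgap
    intro u hu
    rw [Finset.mem_filter] at hu
    exact hL.missing u hu.1 i hu.2

/-- Some entry is below `2`. If it is `0` then all entries are at most `2`, and since the sum is odd
they cannot all be `0` or `2`. -/
theorem exists_eq_one (K : Finset C) (x : C → ℕ) (n : ℕ) (hn : n < K.card)
    (hsum : ∑ i ∈ K, x i = 2 * n + 1) (hbal : ∀ i ∈ K, ∀ j ∈ K, x i ≤ x j + 2) :
    ∃ i ∈ K, x i = 1 := by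
  by_contra! hne
  obtain ⟨i, hi, hi2⟩ : ∃ i ∈ K, x i < 2 := by
    by_contra! h
    have := Finset.sum_le_sum h
    simp at this
    omega
  have h0 : x i = 0 := by have := hne i hi; omega
  have : 2 ∣ ∑ i ∈ K, x i := by
    refine Finset.dvd_sum fun j hj => ?_
    have h1 := hbal j hj i hi
    have h2 := hne j hj
    have : x j = 0 ∨ x j = 2 := by omega
    rcases this with h | h <;> simp [h]
  omega

/-! ### Vizing's theorem -/

/-- If every vertex of `N` misses a colour of `K`, all but at most one of them miss two, and
`|N| ≤ |K|`, then `H` can be recoloured so that there are distinct colours `f u`, for `u ∈ N`, with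
`f u` missing at `u`. Equivalently, the colouring extends to a new vertex joined to `N`. -/
theorem extend_to_vertex (n : ℕ) : ∀ {H : SimpleGraph V} {K : Finset C} {c : Sym2 V → C}
    {N : Finset V} {w : V} {L : V → Finset C}, IsProperOn H K c → #N = n → n ≤ #K →
    (∀ u ∈ N, L u ⊆ K) → (∀ u ∈ N, ∀ a ∈ L u, ∀ y, H.Adj u y → c s(u, y) ≠ a) →
    (∀ u ∈ N, 1 ≤ #(L u)) → (∀ u ∈ N, u ≠ w → 2 ≤ #(L u)) →
    ∃ (c' : Sym2 V → C) (f : V → C), IsProperOn H K c' ∧ Set.InjOn f N ∧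
      ∀ u ∈ N, f u ∈ K ∧ ∀ y, H.Adj u y → c' s(u, y) ≠ f u := by
  induction n with
  | zero =>
    intro H K c N w L hc hN _ _ _ _ _
    rw [Finset.card_eq_zero] at hN
    subst hN
    have : Nonempty (Sym2 V → C) := ⟨c⟩
    by_cases hV : IsEmpty V
    · exact ⟨c, fun v => hV.elim v, hc, by simp, by simp⟩
    · rw [not_isEmpty_iff] at hV
      exact ⟨c, fun v => c s(v, v), hc, by simp, by simp⟩
  | succ n ih =>
    intro H K c N w L hc hN hK hLK hLm hL1 hL2
    -- The exceptional vertex may be taken inside `N`.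
    obtain ⟨w, hwN, hL2⟩ : ∃ w ∈ N, ∀ u ∈ N, u ≠ w → 2 ≤ #(L u) := by
      by_cases hw : w ∈ N
      · exact ⟨w, hw, hL2⟩
      · obtain ⟨w', hw'⟩ : N.Nonempty := Finset.card_pos.1 (by omega)
        exact ⟨w', hw', fun u hu _ => hL2 u hu (by rintro rfl; exact hw hu)⟩
    have hshrink : ∀ u, ∃ M : Finset C, u ∈ N → M ⊆ L u ∧ #M = if u = w then 1 else 2 := by
      intro u
      by_cases hu : u ∈ N
      · obtain ⟨M, hM⟩ := Finset.exists_subset_card_eq (s := L u) (n := if u = w then 1 else 2)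
          (by split_ifs with h
              · exact hL1 u hu
              · exact hL2 u hu h)
        exact ⟨M, fun _ => hM⟩
      · exact ⟨∅, fun h => absurd h hu⟩
    choose M hM using hshrink
    have hlist : IsListed H c K N w M :=
      ⟨fun u hu => (hM u hu).1.trans (hLK u hu),
        fun u hu a ha => hLm u hu a ((hM u hu).1 ha),
        by simpa using (hM w hwN).2,
        fun u hu hne => by simpa [hne] using (hM u hu).2⟩
    obtain ⟨c₁, L₁, hc₁, hL₁, hbal⟩ := exists_balanced hc hlist
    have hsum : ∑ i ∈ K, #{u ∈ N | i ∈ L₁ u} = 2 * n + 1 := by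
      have h1 : ∑ i ∈ K, #{u ∈ N | i ∈ L₁ u} = ∑ u ∈ N, #(L₁ u) := by
        simp only [Finset.card_filter]
        rw [Finset.sum_comm]
        refine Finset.sum_congr rfl fun u hu => ?_
        rw [← Finset.card_filter, Finset.filter_mem_eq_inter,
          Finset.inter_eq_right.2 (hL₁.subset u hu)]
      rw [h1, ← Finset.add_sum_erase N _ hwN, hL₁.card_self,
        Finset.sum_congr rfl fun u hu => hL₁.card_ne u (Finset.mem_of_mem_erase hu)
          (Finset.ne_of_mem_erase hu)]
      simp [Finset.card_erase_of_mem hwN, hN]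
      omega
    obtain ⟨i, hi, hi1⟩ := exists_eq_one K _ n (by omega) hsum hbal
    obtain ⟨v, hv⟩ := Finset.card_eq_one.1 hi1
    have hvi : ∀ u, u ∈ N ∧ i ∈ L₁ u ↔ u = v := by
      intro u
      rw [← Finset.mem_singleton, ← hv, Finset.mem_filter]
    obtain ⟨hvN, hiv⟩ := (hvi v).2 rfl
    -- Drop the colour `i` together with all its edges, and reserve it for `v`.
    let H' : SimpleGraph V := H.deleteEdges {e | c₁ e = i}
    have hH' : ∀ x y, H'.Adj x y ↔ H.Adj x y ∧ c₁ s(x, y) ≠ i := by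
      intro x y
      simp [H', SimpleGraph.deleteEdges_adj]
    have hN' : ∀ u ∈ N.erase v, u ∈ N ∧ i ∉ L₁ u := fun u hu =>
      ⟨Finset.mem_of_mem_erase hu, fun h => Finset.ne_of_mem_erase hu
        ((hvi u).1 ⟨Finset.mem_of_mem_erase hu, h⟩)⟩
    obtain ⟨c₂, f, hc₂, hf, hfm⟩ := ih (H := H') (K := K.erase i) (c := c₁) (N := N.erase v)
      (w := w) (L := L₁)
      ⟨fun x y h => Finset.mem_erase.2 ⟨((hH' x y).1 h).2, hc₁.mem x y ((hH' x y).1 h).1⟩,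
        fun x y z hy hz => hc₁.proper x y z ((hH' x y).1 hy).1 ((hH' x z).1 hz).1⟩
      (by rw [Finset.card_erase_of_mem hvN]; omega)
      (by rw [Finset.card_erase_of_mem hi]; omega)
      (fun u hu a ha => Finset.mem_erase.2
        ⟨by rintro rfl; exact (hN' u hu).2 ha, hL₁.subset u (hN' u hu).1 ha⟩)
      (fun u hu a ha y hy => hL₁.missing u (hN' u hu).1 a ha y ((hH' u y).1 hy).1)
      (fun u hu => by
        by_cases h : u = w
        · rw [h, hL₁.card_self]
        · rw [hL₁.card_ne u (hN' u hu).1 h]; omega)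
      (fun u hu h => (hL₁.card_ne u (hN' u hu).1 h).ge)
    let c₃ : Sym2 V → C := fun e => if c₁ e = i then i else c₂ e
    have hc₂K : ∀ x y, H.Adj x y → c₁ s(x, y) ≠ i → c₂ s(x, y) ∈ K ∧ c₂ s(x, y) ≠ i := by
      intro x y h hne
      have := Finset.mem_erase.1 (hc₂.mem x y ((hH' x y).2 ⟨h, hne⟩))
      exact ⟨this.2, this.1⟩
    refine ⟨c₃, fun u => if u = v then i else f u, ⟨?_, ?_⟩, ?_, ?_⟩
    · intro x y h
      simp only [c₃]
      split_ifs with h1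
      · exact hi
      · exact (hc₂K x y h h1).1
    · intro x y z hy hz h
      simp only [c₃] at h
      split_ifs at h with h1 h2 h2
      · exact hc₁.proper x y z hy hz (h1.trans h2.symm)
      · exact absurd h.symm (hc₂K x z hz h2).2
      · exact absurd h (hc₂K x y hy h1).2
      · exact hc₂.proper x y z ((hH' x y).2 ⟨hy, h1⟩) ((hH' x z).2 ⟨hz, h2⟩) h
    · have hfi : ∀ u ∈ N, u ≠ v → f u ≠ i := fun u hu hne =>
        Finset.ne_of_mem_erase (hfm u (Finset.mem_erase.2 ⟨hne, hu⟩)).1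
      intro x hx y hy h
      dsimp only at h
      split_ifs at h with h1 h2 h2
      · rw [h1, h2]
      · exact absurd h.symm (hfi y hy h2)
      · exact absurd h (hfi x hx h1)
      · exact hf (Finset.mem_coe.2 (Finset.mem_erase.2 ⟨h1, hx⟩))
          (Finset.mem_coe.2 (Finset.mem_erase.2 ⟨h2, hy⟩)) h
    · intro u hu
      dsimp only
      split_ifs with h
      · subst h
        refine ⟨hi, fun y hy => ?_⟩
        have h1 := hL₁.missing u hvN i hiv y hy
        simp only [c₃, h1, if_false]
        exact (hc₂K u y hy h1).2
      · have hfu := hfm u (Finset.mem_erase.2 ⟨h, hu⟩)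
        refine ⟨Finset.mem_of_mem_erase hfu.1, fun y hy => ?_⟩
        simp only [c₃]
        split_ifs with h1
        · exact (Finset.ne_of_mem_erase hfu.1).symm
        · exact hfu.2 y ((hH' u y).2 ⟨hy, h1⟩)

/-- **Vizing's theorem**: a graph of maximum degree at most `D` has a proper edge-colouring with
`D + 1` colours. -/
theorem vizing (G : SimpleGraph V) (D : ℕ) (hD : ∀ v, #{u | G.Adj v u} ≤ D) :
    ∃ c : Sym2 V → Fin (D + 1), IsProperOn G univ c := by
  suffices h : ∀ T : Finset V, ∃ c : Sym2 V → Fin (D + 1),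
      IsProperOn (G.induce T).spanningCoe univ c by
    obtain ⟨c, hc⟩ := h univ
    exact ⟨c, fun _ _ _ => by simp, fun x y z hy hz =>
      hc.proper x y z (by simpa using hy) (by simpa using hz)⟩
  intro T
  induction T using Finset.induction_on with
  | empty => exact ⟨fun _ => 0, by simp, by simp⟩
  | insert v T hv ih =>
    obtain ⟨c, hc⟩ := ih
    set H := (G.induce (T : Set V)).spanningCoe with hHdef
    have hH : ∀ x y, H.Adj x y ↔ G.Adj x y ∧ x ∈ T ∧ y ∈ T := by
      intro x y; simp [hHdef]
    let N : Finset V := {u ∈ T | G.Adj v u}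
    -- A neighbour of `v` has at most `D - 1` neighbours in `T`, so it misses two colours.
    have hmiss : ∀ u ∈ N, 2 ≤ #{a : Fin (D + 1) | ∀ y, H.Adj u y → c s(u, y) ≠ a} := by
      intro u hu
      have hu : u ∈ T ∧ G.Adj v u := by simpa [N] using hu
      have h1 : #{y | H.Adj u y} + 1 ≤ D := by
        refine le_trans ?_ (hD u)
        rw [← Finset.card_insert_of_notMem (a := v) (by simp [hH, hv])]
        refine Finset.card_le_card fun y hy => ?_
        rcases Finset.mem_insert.1 hy with rfl | hy
        · simpa using hu.2.symm
        · simpa using ((hH u y).1 (by simpa using hy)).1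
      have h2 := Finset.card_filter_add_card_filter_not (s := (univ : Finset (Fin (D + 1))))
        (fun a => ∀ y, H.Adj u y → c s(u, y) ≠ a)
      have h3 : #{a : Fin (D + 1) | ¬ ∀ y, H.Adj u y → c s(u, y) ≠ a} ≤ #{y | H.Adj u y} := by
        refine Finset.card_le_card_of_surjOn (fun y => c s(u, y)) ?_
        intro a ha
        simpa using ha
      simp only [Finset.card_univ, Fintype.card_fin] at h2
      omega
    obtain ⟨c', f, hc', hf, hfm⟩ := extend_to_vertex (#N) (w := v) hc rfl
      (by
        refine le_trans (Finset.card_le_card (t := {u | G.Adj v u}) ?_) ((hD v).trans (by simp))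
        intro u hu
        simp only [N, Finset.mem_filter] at hu
        simpa using hu.2)
      (fun u _ => Finset.subset_univ _)
      (fun u _ a ha => (Finset.mem_filter.1 ha).2)
      (fun u hu => by have := hmiss u hu; omega) (fun u hu _ => hmiss u hu)
    let c'' : Sym2 V → Fin (D + 1) := Sym2.lift
      ⟨fun x y => if x = v then f y else if y = v then f x else c' s(x, y), by
        intro x y
        dsimp only
        rw [Sym2.eq_swap]
        split_ifs with h1 h2 <;> simp_all⟩
    have hc'' : ∀ x y, c'' s(x, y) =
      if x = v then f y else if y = v then f x else c' s(x, y) := fun _ _ => rfl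
    have hins : ∀ x y, (G.induce ((insert v T : Finset V) : Set V)).spanningCoe.Adj x y ↔
        G.Adj x y ∧ (x = v ∨ x ∈ T) ∧ (y = v ∨ y ∈ T) := by
      intro x y; simp
    have hNmem : ∀ y, G.Adj v y → (y = v ∨ y ∈ T) → y ∈ N := by
      intro y hy h
      have : y ∈ T := h.resolve_left hy.ne'
      simp [N, this, hy]
    refine ⟨c'', by simp, ?_⟩
    intro x y z hy hz h
    rw [hins] at hy hz
    rw [hc'', hc''] at h
    by_cases hx : x = v
    · subst hx
      simp only [if_true] at h
      exact hf (hNmem y hy.1 hy.2.2) (hNmem z hz.1 hz.2.2) h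
    · have hxT : x ∈ T := hy.2.1.resolve_left hx
      have hcr : ∀ t, G.Adj x t → t ≠ v → (t = v ∨ t ∈ T) → H.Adj x t := fun t h1 h2 h3 =>
        (hH x t).2 ⟨h1, hxT, h3.resolve_left h2⟩
      simp only [hx, if_false] at h
      split_ifs at h with h1 h2 h2
      · rw [h1, h2]
      · subst h1
        exact absurd h.symm ((hfm x (hNmem x hy.1.symm hy.2.1)).2 z (hcr z hz.1 h2 hz.2.2))
      · subst h2
        exact absurd h ((hfm x (hNmem x hz.1.symm hz.2.1)).2 y (hcr y hy.1 h1 hy.2.2))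
      · exact hc'.proper x y z (hcr y hy.1 h1 hy.2.2) (hcr z hz.1 h2 hz.2.2) h

/-! ### Splitting vertices -/

/-- A set of at most `q * m` elements can be partitioned into `q` blocks of size at most `m`. -/
theorem exists_blocks {V : Type*} (s : Finset V) (q m : ℕ) (h : #s ≤ q * m) :
    ∃ p : V → ℕ, (∀ x ∈ s, p x < q) ∧ ∀ a, #{x ∈ s | p x = a} ≤ m := by
  rcases Nat.eq_zero_or_pos m with rfl | hm
  · have : s = ∅ := by simpa using h
    subst this
    exact ⟨fun _ => 0, by simp, by simp⟩
  let g : V → ℕ := fun x => if hx : x ∈ s then (s.equivFin ⟨x, hx⟩ : ℕ) else 0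
  have hg : ∀ x ∈ s, g x < #s := by
    intro x hx
    simp [g, hx]
  have hinj : Set.InjOn g s := by
    intro x hx y hy hxy
    have hx : x ∈ s := hx
    have hy : y ∈ s := hy
    simp only [g, hx, hy, dif_pos] at hxy
    simpa using s.equivFin.injective (Fin.ext hxy)
  refine ⟨fun x => g x / m, fun x hx => ?_, fun a => ?_⟩
  · exact (Nat.div_lt_iff_lt_mul hm).2 ((hg x hx).trans_le h)
  · refine le_trans (Finset.card_le_card_of_injOn g (t := Finset.Ico (a * m) (a * m + m)) ?_
      (hinj.mono fun x hx => (Finset.mem_filter.1 hx).1)) (by simp)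
    intro x hx
    have hx : g x / m = a := (Finset.mem_filter.1 hx).2
    simp only [Finset.coe_Ico, Set.mem_Ico]
    have h1 := Nat.div_add_mod (g x) m
    have h2 := Nat.mod_lt (g x) hm
    rw [hx, mul_comm] at h1
    omega

/-- The graph obtained from `G` by splitting every vertex `u` into copies `(u, a)`, where the edge
from `u` to `v` is attached to the copy `(u, p u v)` of `u`. -/
def splitGraph {V W : Type*} (G : SimpleGraph V) (p : V → V → W) : SimpleGraph (V × W) where
  Adj x y := G.Adj x.1 y.1 ∧ p x.1 y.1 = x.2 ∧ p y.1 x.1 = y.2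
  symm := ⟨fun _ _ h => ⟨h.1.symm, h.2.2, h.2.1⟩⟩
  loopless := ⟨fun x h => G.loopless.irrefl x.1 h.1⟩

/-- If every vertex `u` has degree at most `q u * m`, the edges can be coloured with `m + 1` colours
so that each colour occurs at most `q u` times at every vertex `u`: colour the split graph, whose
maximum degree is at most `m`, by Vizing's theorem. -/
theorem exists_coloring_of_blocks (G : SimpleGraph V) (q : V → ℕ) (m : ℕ)
    (hq : ∀ u, #{v | G.Adj u v} ≤ q u * m) :
    ∃ c : Sym2 V → Fin (m + 1), ∀ u α, #{v | G.Adj u v ∧ c s(u, v) = α} ≤ q u := by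
  choose p hpq hpm using fun u => exists_blocks {v | G.Adj u v} (q u) m (hq u)
  simp only [Finset.mem_filter, Finset.mem_univ, true_and] at hpq
  let B := (univ : Finset (V × V)).sup (fun x => p x.1 x.2) + 1
  have hB : ∀ u v, p u v < B := fun u v =>
    Nat.lt_succ_of_le (Finset.le_sup (f := fun x : V × V => p x.1 x.2) (Finset.mem_univ (u, v)))
  let P : V → V → Fin B := fun u v => ⟨p u v, hB u v⟩
  obtain ⟨c, hc⟩ := vizing (splitGraph G P) m (by
    rintro ⟨u, a⟩
    refine le_trans (Finset.card_le_card_of_injOn Prod.fst ?_ ?_) (hpm u a)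
    · rintro ⟨v, b⟩ h
      have h : (splitGraph G P).Adj (u, a) (v, b) := by simpa using h
      have h2 : p u v = a := congrArg Fin.val h.2.1
      simpa using ⟨h.1, h2⟩
    · rintro ⟨v, b⟩ h ⟨v', b'⟩ h' heq
      have h : (splitGraph G P).Adj (u, a) (v, b) := by simpa using h
      have h' : (splitGraph G P).Adj (u, a) (v', b') := by simpa using h'
      have heq : v = v' := heq
      subst heq
      exact Prod.ext rfl (h.2.2.symm.trans h'.2.2))
  let c' : Sym2 V → Fin (m + 1) := Sym2.lift
    ⟨fun x y => c s((x, P x y), (y, P y x)), fun x y => congrArg c Sym2.eq_swap⟩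
  have hc' : ∀ x y, c' s(x, y) = c s((x, P x y), (y, P y x)) := fun _ _ => rfl
  refine ⟨c', fun u α => ?_⟩
  -- Each of the `q u` copies of `u` meets at most one edge of colour `α`.
  refine le_trans (Finset.card_le_card_of_injOn (p u) (t := Finset.range (q u)) ?_ ?_) (by simp)
  · intro v hv
    simpa using hpq u v (by simpa using (Finset.mem_filter.1 hv).2.1)
  · intro v hv v' hv' heq
    obtain ⟨h1, h2⟩ := (Finset.mem_filter.1 hv).2
    obtain ⟨h1', h2'⟩ := (Finset.mem_filter.1 hv').2
    have hP : P u v' = P u v := Fin.ext heq.symm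
    rw [hc'] at h2 h2'
    rw [hP] at h2'
    exact congrArg Prod.fst (hc.proper (u, P u v) (v, P v u) (v', P v' u) ⟨h1, rfl, rfl⟩
      ⟨h1', hP, rfl⟩ (h2.trans h2'.symm))

end

/-- For every integer `k ≥ 2`, every finite simple graph of minimum degree
at least `k(k-1)` has a `(1/k)`-majority `(k+2)`-edge-coloring: for every vertex `u` and
every color `α`, at most a `1/k`-fraction of the edges incident with `u` have color `α`. -/
theorem inv_k_majority_k_add_two_coloring {V : Type*} [Fintype V] [DecidableEq V]
    (G : SimpleGraph V) [DecidableRel G.Adj] (k : ℕ) (hk : 2 ≤ k)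
    (hmin : ∀ v : V, k * (k - 1) ≤ G.degree v) :
    ∃ c : Sym2 V → Fin (k + 2), ∀ u : V, ∀ α : Fin (k + 2),
      k * ((G.incidenceFinset u).filter (fun e => c e = α)).card ≤ G.degree u := by
  have hdeg : ∀ u, G.degree u = (Finset.univ.filter fun v => G.Adj u v).card := fun u => by
    rw [← SimpleGraph.card_neighborFinset_eq_degree, SimpleGraph.neighborFinset_eq_filter]
  obtain ⟨c, hc⟩ := exists_coloring_of_blocks G (fun u => G.degree u / k) (k + 1) (by
    intro u
    have h1 : k - 1 ≤ G.degree u / k :=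
      (Nat.le_div_iff_mul_le (by omega)).2 (by rw [mul_comm]; exact hmin u)
    have h2 := Nat.div_add_mod (G.degree u) k
    have h3 := Nat.mod_lt (G.degree u) (show 0 < k by omega)
    have h4 : G.degree u ≤ G.degree u / k * (k + 1) := by
      rw [mul_add, mul_comm (G.degree u / k) k]
      omega
    convert h4 using 1
    rw [hdeg]
    congr!)
  refine ⟨c, fun u α => ?_⟩
  refine le_trans (Nat.mul_le_mul_left k ?_) (Nat.mul_div_le (G.degree u) k)
  refine le_trans (Finset.card_le_card_of_surjOn (fun v => s(u, v)) ?_) (hc u α)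
  intro e he
  obtain ⟨he1, he2⟩ := Finset.mem_filter.1 he
  rw [SimpleGraph.mem_incidenceFinset] at he1
  obtain ⟨v, rfl⟩ := Sym2.mem_iff_exists.1 he1.2
  exact ⟨v, by simpa using ⟨he1.1, he2⟩, rfl⟩
end

section
/- Every finite simple graph G of minimum degree at least 2 has a 4-edge-coloring c : E(G) → {1,2,3,4} such that, for every vertex u of G and every color α ∈ {1,2,3,4}, at most ⌈d_G(u)/3⌉ of the edges incident with u have color α; in particular, for every vertex u of degree d at least 4, at most (d+2)/3 of the incident edges have the same color. -/
/-!
Split every vertex `u` into `⌈d(u)/3⌉` copies, distributing the edges at `u` so that each copy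
receives at most three of them. The result is a simple graph of maximum degree at most `3`, and a
proper `4`-edge-coloring of it gives, back in `G`, a coloring in which each color occurs at `u` at
most once per copy (`exists_coloring`). So everything rests on Vizing's theorem for maximum
degree `3` (`exists_isProper`), proved by adding one edge `xy` at a time (`extend`).

Suppose all edges but `xy` are properly colored. At `x` and at `y` at least two of the four colors
are missing; if some color is missing at both, use it on `xy`. Otherwise the colors missing at `x`
and those missing at `y` partition the four colors. Let `b` be missing at `y`, let `xz` be the edge
of color `b` at `x`, and let `d` be missing at `z`. If `d` is missing at `x`, recolor `xz` with
`d` and give `xy` the color `b`. Otherwise `d` is missing at `y`; let `a` be missing at `x`. In the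
subgraph of edges colored `a` or `d` all degrees are at most `2`, and `x`, `y`, `z` have degree at
most `1`, so they are not all in one component (`not_three_ends`). If `y` is not in the component
of `x`, exchange `a` and `d` on the latter, making `d` missing at both `x` and `y`. If `z` is not
in the component of `x`, and `y` is, exchange `a` and `d` on the component of `z`, making `a`
missing at both `x` and `z`; then recolor `xz` with `a` and give `xy` the color `b`.
-/

namespace VizingCubic
open Finset SimpleGraph

/-- `c` restricts to a proper `4`-edge-coloring of `H`. Edge colorings are encoded as symmetric
functions of two vertices; the values on non-adjacent pairs are irrelevant. -/
def IsProper {W : Type*} (H : SimpleGraph W) (c : W → W → Fin 4) : Prop :=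
  (∀ u v, c u v = c v u) ∧
    ∀ u v w, H.Adj u v → H.Adj u w → c u v = c u w → v = w

/-- No edge of `H` at `u` has color `a`. -/
def Missing {W : Type*} (H : SimpleGraph W) (c : W → W → Fin 4) (u : W) (a : Fin 4) : Prop :=
  ∀ w, H.Adj u w → c u w ≠ a

/-- A component of a graph of maximum degree at most `2` has at most two vertices of degree at
most `1`: with `n` vertices it has at least `n - 1` edges, hence degree sum at least `2n - 2`. -/
theorem not_three_ends {W : Type*} [Fintype W] (K : SimpleGraph W)
    (h2 : ∀ v, (K.neighborSet v).ncard ≤ 2) {x y z : W} (hxy : x ≠ y) (hxz : x ≠ z) (hyz : y ≠ z)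
    (hx : (K.neighborSet x).ncard ≤ 1) (hy : (K.neighborSet y).ncard ≤ 1)
    (hz : (K.neighborSet z).ncard ≤ 1) (rxy : K.Reachable x y) (rxz : K.Reachable x z) : False := by
  classical
  let C := K.connectedComponentMk x
  let x' : C := ⟨x, rfl⟩
  let y' : C := ⟨y, (ConnectedComponent.sound rxy.symm)⟩
  let z' : C := ⟨z, (ConnectedComponent.sound rxz.symm)⟩
  have hconn : C.toSimpleGraph.Connected := C.connected_toSimpleGraph
  have h1 := hconn.card_vert_le_card_edgeSet_add_one
  have hs := C.toSimpleGraph.sum_degrees_eq_twice_card_edges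
  have hdeg : ∀ v : C, C.toSimpleGraph.degree v ≤ (K.neighborSet v.1).ncard := by
    intro v
    rw [← card_neighborSet_eq_degree, ← Nat.card_eq_fintype_card, Nat.card_coe_set_eq]
    refine Set.ncard_le_ncard_of_injOn (fun w => w.1) ?_ ?_ (Set.toFinite _)
    · intro w hw
      exact hw
    · intro a _ b _ h
      exact Subtype.ext h
  have hle : ∀ v : C, C.toSimpleGraph.degree v + (if v ∈ ({x', y', z'} : Finset C) then 1 else 0) ≤ 2 := by
    intro v
    have := hdeg v
    have := h2 v.1
    split_ifs with h
    · simp only [Finset.mem_insert, Finset.mem_singleton] at h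
      rcases h with rfl | rfl | rfl
      · exact Nat.succ_le_succ ((hdeg x').trans hx)
      · exact Nat.succ_le_succ ((hdeg y').trans hy)
      · exact Nat.succ_le_succ ((hdeg z').trans hz)
    · omega
  have hsum := Finset.sum_le_sum (s := Finset.univ) (fun v _ => hle v)
  have h3 : ({x', y', z'} : Finset C).card = 3 := by
    rw [Finset.card_eq_three]
    exact ⟨x', y', z', fun h => hxy (congrArg Subtype.val h), fun h => hxz (congrArg Subtype.val h),
      fun h => hyz (congrArg Subtype.val h), rfl⟩
  rw [Finset.sum_add_distrib, hs, Finset.sum_ite_mem, Finset.univ_inter] at hsum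
  simp only [Finset.sum_const, smul_eq_mul, h3, Finset.card_univ] at hsum
  rw [Nat.card_eq_fintype_card, Nat.card_eq_fintype_card, ← edgeFinset_card] at h1
  omega

/-- A color missing at both `x` and `y` can be given to the edge `xy`, whether that edge is new or
already present in `H`. -/
theorem IsProper.recolor {W : Type*} {H : SimpleGraph W} {c : W → W → Fin 4} (hc : IsProper H c)
    {x y : W} (hxy : x ≠ y) {a : Fin 4} (hx : Missing H c x a) (hy : Missing H c y a) :
    ∃ c', IsProper (H ⊔ edge x y) c' ∧ c' x y = a ∧
      ∀ u v, s(u, v) ≠ s(x, y) → c' u v = c u v := by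
  classical
  obtain ⟨hs, hp⟩ := hc
  refine ⟨fun u v => if s(u, v) = s(x, y) then a else c u v, ⟨?_, ?_⟩, by simp, ?_⟩
  · intro u v
    simp only [Sym2.eq_swap (a := u), hs u v]
  · intro u v w
    simp only [sup_adj, edge_adj]
    unfold Missing at hx hy
    simp only [Sym2.eq_iff]
    grind
  · intro u v h
    simp [h]

/-- Kempe exchange: if no edge colored `a` or `b` leaves `S`, exchanging `a` and `b` on the edges
meeting `S` keeps the coloring proper. -/
theorem IsProper.kempe {W : Type*} {H : SimpleGraph W} {c : W → W → Fin 4} (hc : IsProper H c)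
    (a b : Fin 4) {S : Set W}
    (hS : ∀ u v, H.Adj u v → (c u v = a ∨ c u v = b) → u ∈ S → v ∈ S) :
    ∃ c', IsProper H c' ∧ (∀ u v, H.Adj u v → u ∉ S → c' u v = c u v) ∧
      (∀ u v, H.Adj u v → u ∈ S → c' u v = Equiv.swap a b (c u v)) := by
  classical
  obtain ⟨hs, hp⟩ := hc
  have key : ∀ u v, H.Adj u v → u ∈ S → v ∉ S → Equiv.swap a b (c u v) = c u v := by
    intro u v h hu hv
    apply Equiv.swap_apply_of_ne_of_ne <;> grind
  have h1 : ∀ u v, H.Adj u v → u ∉ S →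
      (if u ∈ S ∨ v ∈ S then Equiv.swap a b (c u v) else c u v) = c u v := by
    intro u v h hu
    by_cases hv : v ∈ S
    · simp [hv, hs u v, key v u h.symm hv hu]
    · simp [hu, hv]
  refine ⟨fun u v => if u ∈ S ∨ v ∈ S then Equiv.swap a b (c u v) else c u v, ⟨?_, ?_⟩, h1, ?_⟩
  · intro u v
    simp only [hs u v, or_comm]
  · intro u v w huv huw h
    by_cases hu : u ∈ S
    · simp only [hu, true_or, if_true] at h
      exact hp u v w huv huw ((Equiv.swap a b).injective h)
    · simp only [h1 u v huv hu, h1 u w huw hu] at h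
      exact hp u v w huv huw h
  · intro u v _ hu
    simp [hu]

/-- The subgraph of `H` formed by the edges of color `a` or `b`. -/
def bicolored {W : Type*} (H : SimpleGraph W) (c : W → W → Fin 4) (hs : ∀ u v, c u v = c v u)
    (a b : Fin 4) : SimpleGraph W where
  Adj u v := H.Adj u v ∧ (c u v = a ∨ c u v = b)
  symm := ⟨fun u v h => ⟨h.1.symm, by rw [hs v u]; exact h.2⟩⟩
  loopless := ⟨fun u h => H.irrefl h.1⟩

theorem ncard_neighborSet_le {W : Type*} {H K : SimpleGraph W} {c : W → W → Fin 4}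
    (hc : IsProper H c) (hK : K ≤ H) (u : W) (s : Finset (Fin 4))
    (h : ∀ v, K.Adj u v → c u v ∈ s) : (K.neighborSet u).ncard ≤ s.card := by
  rw [← Set.ncard_coe_finset]
  refine Set.ncard_le_ncard_of_injOn (c u) (fun v hv => h v hv) ?_ (Finset.finite_toSet _)
  intro v hv w hw hvw
  exact hc.2 u v w (hK hv) (hK hw) hvw

/-- Each of the four colors is missing at `u` or occurs on some edge at `u`. -/
theorem card_missing {W : Type*} [Finite W] {H : SimpleGraph W} {c : W → W → Fin 4} (u : W)
    (s : Finset (Fin 4)) (hs : ∀ a, a ∈ s ↔ Missing H c u a) :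
    4 ≤ s.card + (H.neighborSet u).ncard := by
  classical
  have h1 : sᶜ.card ≤ (H.neighborSet u).ncard := by
    rw [← Set.ncard_coe_finset]
    refine (Set.ncard_le_ncard (t := c u '' H.neighborSet u) ?_ (Set.toFinite _)).trans
      (Set.ncard_image_le (Set.toFinite _))
    intro a ha
    have : ¬ Missing H c u a := by simpa [hs] using ha
    simp only [Missing, not_forall, not_not] at this
    obtain ⟨w, hw, h⟩ := this
    exact ⟨w, hw, h⟩
  rw [Finset.card_compl, Fintype.card_fin] at h1
  omega

/-- A proper coloring of `H` yields one of `H` with the edge `xy` added, as long as the degrees stay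
at most `3`. -/
theorem extend {W : Type*} [Fintype W] {H : SimpleGraph W} {c : W → W → Fin 4}
    (hc : IsProper H c) {x y : W} (hxy : x ≠ y) (hnadj : ¬ H.Adj x y)
    (h3 : ∀ v, (H.neighborSet v).ncard ≤ 3)
    (hx : (H.neighborSet x).ncard ≤ 2) (hy : (H.neighborSet y).ncard ≤ 2) :
    ∃ c', IsProper (H ⊔ edge x y) c' := by
  classical
  let M : W → Finset (Fin 4) := fun u => Finset.univ.filter (fun a => Missing H c u a)
  have hM : ∀ u a, a ∈ M u ↔ Missing H c u a := by simp [M]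
  have cM := fun u => card_missing u (M u) (hM u)
  by_cases hcom : ∃ a, a ∈ M x ∧ a ∈ M y
  · obtain ⟨a, h1, h2⟩ := hcom
    obtain ⟨c', h, -⟩ := hc.recolor hxy ((hM _ _).1 h1) ((hM _ _).1 h2)
    exact ⟨c', h⟩
  have hdisj : Disjoint (M x) (M y) := by
    rw [Finset.disjoint_left]
    exact fun a h1 h2 => hcom ⟨a, h1, h2⟩
  have hunion : M x ∪ M y = Finset.univ := by
    apply Finset.eq_univ_of_card
    have := Finset.card_le_univ (M x ∪ M y)
    rw [Finset.card_union_of_disjoint hdisj] at *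
    rw [Fintype.card_fin] at *
    have := cM x
    have := cM y
    omega
  obtain ⟨a, ha⟩ : (M x).Nonempty := by
    have := cM x
    exact Finset.card_pos.1 (by omega)
  obtain ⟨b, hb⟩ : (M y).Nonempty := by
    have := cM y
    exact Finset.card_pos.1 (by omega)
  have hbx : b ∉ M x := fun h => hcom ⟨b, h, hb⟩
  obtain ⟨z, hz, hzb⟩ : ∃ z, H.Adj x z ∧ c x z = b := by
    simpa [hM, Missing] using hbx
  have hzy : y ≠ z := by rintro rfl; exact hnadj hz
  have hxz : x ≠ z := hz.ne
  -- `xz` hands its color `b` over to `xy` and takes a color `d` missing at both `x` and `z`;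
  -- stated for any coloring, since it is also needed after a Kempe exchange.
  have rotate : ∀ (c₁ : W → W → Fin 4) (d : Fin 4), IsProper H c₁ → c₁ x z = b →
      Missing H c₁ y b → Missing H c₁ x d → Missing H c₁ z d →
      ∃ c', IsProper (H ⊔ edge x y) c' := by
    intro c₁ d h₁ hxz₁ hyb hxd hzd
    obtain ⟨c₂, h₂, e₂, f₂⟩ := h₁.recolor hxz hxd hzd
    have hH : H ⊔ edge x z = H := by
      rw [sup_eq_left, edge_le_iff]
      exact Or.inr hz
    rw [hH] at h₂
    have hdb : d ≠ b := fun h => hxd z hz (hxz₁.trans h.symm)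
    obtain ⟨c', h, -⟩ := h₂.recolor (a := b) hxy (x := x) (y := y) (by
      intro w hw
      by_cases hwz : w = z
      · rw [hwz, e₂]; exact hdb
      · rw [f₂ x w (by simp [hwz, hxz])]
        intro h
        exact hwz (h₁.2 x w z hw hz (h.trans hxz₁.symm))) (by
      intro w hw
      rw [f₂ y w (by simp [hxy.symm, hzy])]
      exact hyb w hw)
    exact ⟨c', h⟩
  obtain ⟨d, hd⟩ : (M z).Nonempty := by
    have := cM z
    have := h3 z
    exact Finset.card_pos.1 (by omega)
  by_cases hdx : d ∈ M x
  · exact rotate c d hc hzb ((hM _ _).1 hb) ((hM _ _).1 hdx) ((hM _ _).1 hd)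
  have hdy : d ∈ M y := by
    have := Finset.mem_univ d
    rw [← hunion, Finset.mem_union] at this
    exact this.resolve_left hdx
  have had : a ≠ d := by rintro rfl; exact hdx ha
  have hab : a ≠ b := by rintro rfl; exact hbx ha
  rw [hM] at ha hb hd hdy
  have hbd : b ≠ d := by
    rintro rfl
    exact hd x hz.symm (by rw [hc.1, hzb])
  let K := bicolored H c hc.1 a d
  have hK : K ≤ H := fun u v h => h.1
  have hclosed : ∀ t u v, H.Adj u v → (c u v = a ∨ c u v = d) →
      u ∈ {w | K.Reachable t w} → v ∈ {w | K.Reachable t w} := by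
    intro t u v huv h hu
    exact Reachable.trans hu (Adj.reachable (G := K) ⟨huv, h⟩)
  have end_a : ∀ u, Missing H c u a → (K.neighborSet u).ncard ≤ 1 := fun u hu =>
    ncard_neighborSet_le hc hK u {d} fun v hv => by simpa using hv.2.resolve_left (hu v hv.1)
  have end_d : ∀ u, Missing H c u d → (K.neighborSet u).ncard ≤ 1 := fun u hu =>
    ncard_neighborSet_le hc hK u {a} fun v hv => by simpa using hv.2.resolve_right (hu v hv.1)
  have hK2 : ∀ u, (K.neighborSet u).ncard ≤ 2 := fun u =>
    (ncard_neighborSet_le hc hK u {a, d} fun v hv => by simpa using hv.2).trans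
      Finset.card_le_two
  by_cases rxy : K.Reachable x y
  · have rxz : ¬ K.Reachable x z := fun rxz =>
      not_three_ends K hK2 hxy hxz hzy (end_a x ha) (end_d y hdy) (end_d z hd) rxy rxz
    obtain ⟨c₁, h₁, hout, hin⟩ := hc.kempe a d (hclosed z)
    have hxS : x ∉ {w | K.Reachable z w} := fun h => rxz h.symm
    have hyS : y ∉ {w | K.Reachable z w} := fun h => rxz (rxy.trans h.symm)
    refine rotate c₁ a h₁ (by rw [hout x z hz hxS, hzb]) ?_ ?_ ?_
    · intro w hw
      rw [hout y w hw hyS]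
      exact hb w hw
    · intro w hw
      rw [hout x w hw hxS]
      exact ha w hw
    · intro w hw
      rw [hin z w hw (Reachable.refl z), Ne, Equiv.swap_apply_eq_iff, Equiv.swap_apply_left]
      exact hd w hw
  · obtain ⟨c₁, h₁, hout, hin⟩ := hc.kempe a d (hclosed x)
    obtain ⟨c', h, -⟩ := h₁.recolor (a := d) hxy (x := x) (y := y) (by
      intro w hw
      rw [hin x w hw (Reachable.refl x), Ne, Equiv.swap_apply_eq_iff, Equiv.swap_apply_right]
      exact ha w hw) (by
      intro w hw
      rw [hout y w hw rxy]
      exact hdy w hw)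
    exact ⟨c', h⟩

/-- Vizing's theorem for maximum degree at most `3`. -/
theorem exists_isProper {W : Type*} [Fintype W] (H : SimpleGraph W)
    (h3 : ∀ v, (H.neighborSet v).ncard ≤ 3) : ∃ c, IsProper H c := by
  induction hn : H.edgeSet.ncard using Nat.strong_induction_on generalizing H with
  | _ n ih =>
  by_cases hE : ∃ x y, H.Adj x y
  · obtain ⟨x, y, hxy⟩ := hE
    let H' := H.deleteEdges {s(x, y)}
    have hle : H' ≤ H := deleteEdges_le _
    have hnadj : ¬ H'.Adj x y := by simp [H']
    have hlt : H'.edgeSet.ncard < n := by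
      rw [← hn]
      refine Set.ncard_lt_ncard (edgeSet_ssubset_edgeSet.2 (lt_of_le_of_ne hle ?_)) (Set.toFinite _)
      intro h
      exact hnadj (h ▸ hxy)
    have hlt' : ∀ u v, H.Adj u v → ¬ H'.Adj u v → (H'.neighborSet u).ncard ≤ 2 := by
      intro u v h h'
      have : (H'.neighborSet u).ncard < (H.neighborSet u).ncard := by
        refine Set.ncard_lt_ncard ⟨fun w hw => hle hw, fun hsub => h' (hsub h)⟩ (Set.toFinite _)
      have := h3 u
      omega
    have h3' : ∀ v, (H'.neighborSet v).ncard ≤ 3 := fun v =>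
      (Set.ncard_le_ncard (fun w hw => hle hw) (Set.toFinite _)).trans (h3 v)
    obtain ⟨c, hc⟩ := ih _ hlt H' h3' rfl
    obtain ⟨c', hc'⟩ := extend hc hxy.ne hnadj h3' (hlt' x y hxy hnadj)
      (hlt' y x hxy.symm fun h => hnadj h.symm)
    refine ⟨c', hc'.1, fun u v w huv huw => hc'.2 u v w ?_ ?_⟩
    all_goals
      simp only [H', sup_adj, deleteEdges_adj, edge_adj, Set.mem_singleton_iff, Sym2.eq_iff]
      have := huv.ne
      have := huw.ne
      tauto
  · exact ⟨fun _ _ => 0, fun _ _ => rfl, fun u v w h => absurd ⟨u, v, h⟩ hE⟩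

/-- The bound in terms of neighbors, deduced from `exists_isProper` by splitting vertices. -/
theorem exists_coloring {V : Type*} [Fintype V] [DecidableEq V]
    (G : SimpleGraph V) [DecidableRel G.Adj] : ∃ c : V → V → Fin 4, (∀ u v, c u v = c v u) ∧
      ∀ u a, ((G.neighborFinset u).filter (fun v => c u v = a)).card ≤ (G.degree u + 2) / 3 := by
  classical
  have hidx : ∀ u, ∃ f : V → ℕ, (∀ v, G.Adj u v → f v < G.degree u) ∧
      ∀ v w, G.Adj u v → G.Adj u w → f v = f w → v = w := by
    intro u
    let e := (G.neighborFinset u).equivFin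
    refine ⟨fun v => if h : v ∈ G.neighborFinset u then e ⟨v, h⟩ else 0, ?_, ?_⟩
    · intro v hv
      have hv' : v ∈ G.neighborFinset u := by simpa using hv
      simp only [hv', dif_pos]
      exact (e ⟨v, hv'⟩).2
    · intro v w hv hw h
      have hv' : v ∈ G.neighborFinset u := by simpa using hv
      have hw' : w ∈ G.neighborFinset u := by simpa using hw
      simp only [hv', hw', dif_pos] at h
      simpa using e.injective (Fin.ext h)
  choose f hf hinj using hidx
  -- `f u` numbers the neighbors of `u`, and the edge `uv` is attached to copy `p u v = f u v / 3`
  -- of `u`; the copies of `u` not met by any edge are isolated vertices of `H`.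
  let n := Fintype.card V
  let p : V → V → Fin (n + 1) := fun u v => Fin.ofNat (n + 1) (f u v / 3)
  have hp : ∀ u v, G.Adj u v → (p u v : ℕ) = f u v / 3 := by
    intro u v h
    have h1 := hf u v h
    have h2 := G.degree_lt_card_verts u
    simp only [p, Fin.val_ofNat]
    exact Nat.mod_eq_of_lt (by omega)
  let H : SimpleGraph (V × Fin (n + 1)) :=
    { Adj := fun s t => G.Adj s.1 t.1 ∧ s.2 = p s.1 t.1 ∧ t.2 = p t.1 s.1
      symm := ⟨fun s t h => ⟨h.1.symm, h.2.2, h.2.1⟩⟩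
      loopless := ⟨fun s h => G.irrefl h.1⟩ }
  obtain ⟨c, hs, hc⟩ := exists_isProper H (by
    intro s
    have : (3 : ℕ) = ((Finset.range 3 : Finset ℕ) : Set ℕ).ncard := by
      rw [Set.ncard_coe_finset, Finset.card_range]
    rw [this]
    refine Set.ncard_le_ncard_of_injOn (fun t => f s.1 t.1 % 3) ?_ ?_ (Finset.finite_toSet _)
    · intro t _
      simpa using Nat.mod_lt _ (by norm_num)
    · rintro t ⟨h1, h2, h3⟩ t' ⟨h1', h2', h3'⟩ h
      have e1 := hp _ _ h1
      have e2 := hp _ _ h1'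
      rw [← h2] at e1
      rw [← h2'] at e2
      have heq : t.1 = t'.1 := hinj s.1 _ _ h1 h1' (by simp only at h; omega)
      exact Prod.ext heq (by rw [h3, h3', heq]))
  refine ⟨fun u v => c (u, p u v) (v, p v u), fun u v => hs _ _, fun u a => ?_⟩
  rw [← Finset.card_range ((G.degree u + 2) / 3)]
  refine Finset.card_le_card_of_injOn (fun v => f u v / 3) ?_ ?_
  · intro v hv
    have hv : G.Adj u v := by
      simp at hv
      exact hv.1
    have := hf u v hv
    simp only [Finset.coe_range, Set.mem_Iio]
    omega
  · intro v hv w hw h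
    simp only [Finset.coe_filter, mem_neighborFinset, Set.mem_ofPred_eq] at hv hw
    have hpe : p u v = p u w := Fin.ext (by rw [hp _ _ hv.1, hp _ _ hw.1]; exact h)
    refine congrArg Prod.fst (hc (u, p u v) (v, p v u) (w, p w u) ⟨hv.1, rfl, rfl⟩
      ⟨hw.1, hpe, rfl⟩ ?_)
    rw [hv.2, hpe, hw.2]

end VizingCubic

/-- Every finite simple graph `G` of minimum degree at least `2` has a
`4`-edge-coloring such that, for every vertex `u` and every color `α`, at most
`⌈d_G(u)/3⌉` of the edges incident with `u` have color `α`; in particular (and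
equivalently, since `⌈d/3⌉ = ⌊(d+2)/3⌋`), for every vertex `u` of degree `d ≥ 4`, at
most `(d+2)/3` of the incident edges have the same color.  Here `(G.degree u + 2) / 3`
is natural division, which equals `⌈d_G(u)/3⌉`. -/
theorem four_coloring_third_ceil {V : Type*} [Fintype V] [DecidableEq V]
    (G : SimpleGraph V) [DecidableRel G.Adj] (hmin : ∀ v : V, 2 ≤ G.degree v) :
    ∃ c : Sym2 V → Fin 4, ∀ u : V, ∀ α : Fin 4,
      (((G.incidenceFinset u).filter (fun e => c e = α)).card : ℚ) ≤ ⌈(G.degree u : ℚ) / 3⌉ ∧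
      (4 ≤ G.degree u →
        (((G.incidenceFinset u).filter (fun e => c e = α)).card : ℚ)
          ≤ ((G.degree u : ℚ) + 2) / 3) := by
  obtain ⟨c, hs, hc⟩ := VizingCubic.exists_coloring G
  refine ⟨Sym2.lift ⟨c, hs⟩, fun u α => ?_⟩
  have key : ((G.incidenceFinset u).filter (fun e => Sym2.lift ⟨c, hs⟩ e = α)).card
      ≤ (G.degree u + 2) / 3 := by
    refine le_trans ?_ (hc u α)
    refine le_trans (Finset.card_le_card ?_) (Finset.card_image_le (f := fun v => s(u, v)))
    intro e he
    rw [Finset.mem_filter, SimpleGraph.mem_incidenceFinset] at he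
    obtain ⟨⟨heG, hue⟩, hcol⟩ := he
    obtain ⟨v, rfl⟩ := Sym2.mem_iff_exists.1 hue
    refine Finset.mem_image.2 ⟨v, ?_, rfl⟩
    simpa using ⟨heG, hcol⟩
  generalize ((G.incidenceFinset u).filter (fun e => Sym2.lift ⟨c, hs⟩ e = α)).card = k at key
  have key3 : 3 * k ≤ G.degree u + 2 := by omega
  have key3' : (3 * k : ℚ) ≤ G.degree u + 2 := by exact_mod_cast key3
  refine ⟨?_, fun _ => by linarith⟩
  have h1 : ((k : ℤ) - 1) < ⌈(G.degree u : ℚ) / 3⌉ := by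
    rw [Int.lt_ceil]
    push_cast
    linarith
  have h2 : (k : ℤ) ≤ ⌈(G.degree u : ℚ) / 3⌉ := by omega
  exact_mod_cast h2
end
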